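/- arXiv:1712.04549 — 2 statements merged into one kernel-verified Lean document; each statement's English description precedes it below -/
import Mathlib

section
/- If a graph H has no minor isomorphic to K_4, C_{3,2}, or A, then H has a vertex v such that H∖v is a forest. -/
/-!
Common definitions: minors, widths, connectivity, the specific graphs
`K4`, `K23`, `C32`, `graphA`, the binary trees `CT_h`, the graphs `𝒫_k`, `𝒬_k`,
the trees `T_h`, homeomorphic embeddings, cascades, and related notions,
following Dang--Thomas, "Minors of two-connected graphs of large path-width".
-/

open SimpleGraph

/-- A minor model of `H` in `G`: branch sets `f w` are nonempty, connected,
pairwise disjoint, and edges of `H` are realized by edges of `G` between branch sets. -/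
def IsMinorModel {W V : Type*} (H : SimpleGraph W) (G : SimpleGraph V) (f : W → Set V) : Prop :=
  (∀ w, (f w).Nonempty) ∧
  (∀ w, (G.induce (f w)).Connected) ∧
  (∀ w₁ w₂ : W, w₁ ≠ w₂ → Disjoint (f w₁) (f w₂)) ∧
  (∀ w₁ w₂ : W, H.Adj w₁ w₂ → ∃ v₁ ∈ f w₁, ∃ v₂ ∈ f w₂, G.Adj v₁ v₂)

/-- `H` is (isomorphic to) a minor of `G`. -/
def IsMinor {W V : Type*} (H : SimpleGraph W) (G : SimpleGraph V) : Prop :=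
  ∃ f : W → Set V, IsMinorModel H G f

/-- The complete graph on four vertices. -/
def K4 : SimpleGraph (Fin 4) := ⊤

/-- The complete bipartite graph `K_{2,3}`. -/
def K23 : SimpleGraph (Fin 2 ⊕ Fin 3) := completeBipartiteGraph (Fin 2) (Fin 3)

/-- The graph `A`: a cycle `a₁a₂a₃a₄a₅a₆a₁` plus the edges `a₁a₃`, `a₃a₅`, `a₅a₁`. -/
def graphA : SimpleGraph (Fin 6) :=
  SimpleGraph.fromEdgeSet
    {s(0, 1), s(1, 2), s(2, 3), s(3, 4), s(4, 5), s(5, 0), s(0, 2), s(2, 4), s(4, 0)}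

/-- The graph `C_{3,2}`: two disjoint triangles. -/
def C32 : SimpleGraph (Fin 2 × Fin 3) :=
  SimpleGraph.fromRel (fun u v => u.1 = v.1)

/-- A graph is outerplanar iff it has no `K₄` minor and no `K_{2,3}` minor
(the classical characterization of outerplanarity). -/
def Outerplanar {V : Type*} (G : SimpleGraph V) : Prop :=
  ¬ IsMinor K4 G ∧ ¬ IsMinor K23 G

/-- `G` is `k`-connected: it has more than `k` vertices and deleting fewer than `k`
vertices leaves a connected graph. -/
def IsKConnected {V : Type*} [Fintype V] (k : ℕ) (G : SimpleGraph V) : Prop :=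
  k + 1 ≤ Fintype.card V ∧
  ∀ S : Finset V, S.card < k → (G.induce ((↑S : Set V)ᶜ)).Connected

/-- `(Tr, X)` is a tree-decomposition of `G`: `Tr` is a tree, the bags `X t` cover all
vertices and edges (W1), and whenever `t₂` lies on the path of `Tr` between `t₁` and `t₃`
we have `X t₁ ∩ X t₃ ⊆ X t₂` (W2). -/
def IsTreeDecomp {V T : Type*} (G : SimpleGraph V) (Tr : SimpleGraph T) (X : T → Finset V) :
    Prop :=
  Tr.IsTree ∧
  (∀ v : V, ∃ t, v ∈ X t) ∧
  (∀ u v : V, G.Adj u v → ∃ t, u ∈ X t ∧ v ∈ X t) ∧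
  (∀ (t₁ t₂ t₃ : T) (p : Tr.Walk t₁ t₃), p.IsPath → t₂ ∈ p.support →
    ∀ v : V, v ∈ X t₁ → v ∈ X t₃ → v ∈ X t₂)

/-- A path-decomposition of `G`, with bags indexed by `Fin n`. -/
def IsPathDecomp {V : Type*} (G : SimpleGraph V) {n : ℕ} (X : Fin n → Finset V) : Prop :=
  (∀ v : V, ∃ i, v ∈ X i) ∧
  (∀ u v : V, G.Adj u v → ∃ i, u ∈ X i ∧ v ∈ X i) ∧
  (∀ i j k : Fin n, i ≤ j → j ≤ k → ∀ v : V, v ∈ X i → v ∈ X k → v ∈ X j)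

/-- The path-width of a finite graph: the least `w` such that `G` has a
path-decomposition all of whose bags have at most `w + 1` vertices. -/
noncomputable def pathwidth {V : Type*} [Fintype V] (G : SimpleGraph V) : ℕ :=
  sInf {w | ∃ (n : ℕ) (X : Fin n → Finset V), IsPathDecomp G X ∧ ∀ i, (X i).card ≤ w + 1}

/-- The tree-width of a finite graph: the least `w` such that `G` has a
tree-decomposition all of whose bags have at most `w + 1` vertices. -/
noncomputable def treewidth {V : Type*} [Fintype V] (G : SimpleGraph V) : ℕ :=
  sInf {w | ∃ (T : Type) (_ : Fintype T) (Tr : SimpleGraph T) (X : T → Finset V),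
    IsTreeDecomp G Tr X ∧ ∀ t, (X t).card ≤ w + 1}

/-- Vertices of the binary tree `CT_h`: paths from the root, recorded as reversed
lists of left/right moves, of length at most `h`. -/
abbrev CTVert (h : ℕ) := {l : List Bool // l.length ≤ h}

/-- The binary tree `CT_h` of height `h`. -/
def CTgraph (h : ℕ) : SimpleGraph (CTVert h) :=
  SimpleGraph.fromEdgeSet
    {e | ∃ (b : Bool) (σ : List Bool) (hσ : σ.length < h),
      e = s((⟨σ, le_of_lt hσ⟩ : CTVert h), (⟨b :: σ, by simpa using hσ⟩ : CTVert h))}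

/-- The graph `𝒫_k`: the binary tree `CT_k` together with one extra vertex (`none`)
adjacent to every leaf of `CT_k`. -/
def Pgraph (k : ℕ) : SimpleGraph (Option (CTVert k)) :=
  SimpleGraph.fromEdgeSet
    ({e | ∃ (b : Bool) (σ : List Bool) (hσ : σ.length < k),
        e = s(some (⟨σ, le_of_lt hσ⟩ : CTVert k), some (⟨b :: σ, by simpa using hσ⟩ : CTVert k))} ∪
     {e | ∃ l : CTVert k, l.1.length = k ∧ e = s(none, some l)})

/-- Vertices of `𝒬_k`: the two base vertices of the root triangle (`Sum.inl false` and
`Sum.inl true`), together with one apex vertex for each node of the complete binary tree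
of depth `< k` (recorded as a reversed list of moves). -/
abbrev QVert (k : ℕ) := Bool ⊕ {l : List Bool // l.length < k}

/-- The two ends of the base edge of the copy of the triangle at node `σ` of `𝒬_k`. -/
def qbase (k : ℕ) : List Bool → QVert k × QVert k
  | [] => (Sum.inl false, Sum.inl true)
  | b :: σ =>
      ((if b then (qbase k σ).2 else (qbase k σ).1),
        if h : σ.length < k then Sum.inr ⟨σ, h⟩ else Sum.inl false)

/-- The graph `𝒬_k`, built from triangles as in the recursive definition: the triangle at
node `σ` consists of the base edge `qbase k σ` together with the apex vertex `Sum.inr σ`;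
the base edge of `𝒬_k` is `s(Sum.inl false, Sum.inl true)`. -/
def Qgraph (k : ℕ) : SimpleGraph (QVert k) :=
  SimpleGraph.fromEdgeSet
    ({s(Sum.inl false, Sum.inl true)} ∪
     {e | ∃ (σ : List Bool) (h : σ.length < k),
        e = s(Sum.inr ⟨σ, h⟩, (qbase k σ).1) ∨ e = s(Sum.inr ⟨σ, h⟩, (qbase k σ).2)})

/-- The minor vertices of the tree `T_h` (one for each string of length `≤ h`). -/
abbrev MVert (h : ℕ) := {l : List Bool // l.length ≤ h}

/-- The major vertices of the tree `T_h` (one for each string of length `≤ h - 1`). -/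
abbrev JVert (h : ℕ) := {l : List Bool // l.length + 1 ≤ h}

/-- Vertices of the tree `T_h` (obtained from `CT_h` by subdividing every edge not incident
with a degree-one vertex and adding the minor root). -/
abbrev TVert (h : ℕ) := MVert h ⊕ JVert h

/-- The tree `T_h`: each major vertex `σ` is adjacent to the minor vertices `σ` (its parent),
`false :: σ` (its left neighbor) and `true :: σ` (its right neighbor). -/
def Tgraph (h : ℕ) : SimpleGraph (TVert h) :=
  SimpleGraph.fromEdgeSet
    {e | ∃ (σ : List Bool) (hσ : σ.length + 1 ≤ h),
      e = s(Sum.inr ⟨σ, hσ⟩, Sum.inl ⟨σ, Nat.le_of_succ_le hσ⟩) ∨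
      ∃ b : Bool, e = s(Sum.inr ⟨σ, hσ⟩, Sum.inl ⟨b :: σ, by simpa using hσ⟩)}

/-- A homeomorphic embedding of `TA` into `TB`: an injection such that for any two edges of
`TA` sharing an end `t`, the corresponding paths of `TB` are edge-disjoint. -/
def IsHomeoEmb {A B : Type*} (TA : SimpleGraph A) (TB : SimpleGraph B) (η : A → B) : Prop :=
  Function.Injective η ∧
  ∀ ⦃t t₁ t₂ : A⦄, TA.Adj t t₁ → TA.Adj t t₂ → t₁ ≠ t₂ →
    ∀ (p₁ : TB.Walk (η t) (η t₁)) (p₂ : TB.Walk (η t) (η t₂)),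
      p₁.IsPath → p₂.IsPath → ∀ e ∈ p₁.edges, e ∉ p₂.edges

/-- `v` lies in the span of `η`: it lies on a path of `TB` between two vertices in the
image of `η`. -/
def inSpan {A B : Type*} (TB : SimpleGraph B) (η : A → B) (v : B) : Prop :=
  ∃ (a₁ a₂ : A) (p : TB.Walk (η a₁) (η a₂)), p.IsPath ∧ v ∈ p.support

/-- A cascade of height `h` and size `s` in the tree-decomposition `(Tr, X)`:
a homeomorphic embedding of `T_h` with `|X (η t)| = s` for every minor vertex `t`
and `|X t| ≥ s` for every `t` in the span. -/
def IsCascade {V T : Type*} (Tr : SimpleGraph T) (X : T → Finset V) (h s : ℕ)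
    (η : TVert h → T) : Prop :=
  IsHomeoEmb (Tgraph h) Tr η ∧
  (∀ l : MVert h, (X (η (Sum.inl l))).card = s) ∧
  (∀ t : T, inSpan Tr η t → s ≤ (X t).card)

/-- An injective cascade with common intersection set `I`. -/
def IsInjectiveCascade {V T : Type*} (Tr : SimpleGraph T) (X : T → Finset V) (h s : ℕ)
    (η : TVert h → T) (I : Finset V) : Prop :=
  IsCascade Tr X h s η ∧ I.card < s ∧
  ∀ t t' : TVert h, t ≠ t' → ((X (η t) : Set V) ∩ (X (η t') : Set V)) = (I : Set V)

/-- A family of `s` disjoint paths in `G \ I` (a linkage). -/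
def IsLinkage {V : Type*} (G : SimpleGraph V) (I : Finset V) {s : ℕ} {x y : Fin s → V}
    (P : ∀ i : Fin s, G.Walk (x i) (y i)) : Prop :=
  (∀ i, (P i).IsPath) ∧
  (∀ i, ∀ v ∈ (P i).support, v ∉ I) ∧
  (∀ i j, i ≠ j → ∀ v ∈ (P i).support, v ∉ (P j).support)

/-- An ordered cascade: an injective cascade of size `s + |I|` with common intersection set
`I`, together with orderings `ξ t : Fin s → X (η t) \ I` of the bags at minor vertices, such
that at every major vertex there are left and right linkages connecting corresponding
vertices. -/
def IsOrderedCascade {V T : Type*} (G : SimpleGraph V) (Tr : SimpleGraph T)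
    (X : T → Finset V) (h s : ℕ) (η : TVert h → T) (I : Finset V)
    (ξ : MVert h → Fin s → V) : Prop :=
  IsInjectiveCascade Tr X h (s + I.card) η I ∧
  (∀ t : MVert h, Function.Injective (ξ t) ∧
    Set.range (ξ t) = (X (η (Sum.inl t)) : Set V) \ (I : Set V)) ∧
  ∀ (σ : List Bool) (hσ : σ.length + 1 ≤ h),
    (∃ P : ∀ i : Fin s,
        G.Walk (ξ ⟨σ, Nat.le_of_succ_le hσ⟩ i) (ξ ⟨false :: σ, by simpa using hσ⟩ i),
      IsLinkage G I P) ∧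
    (∃ Q : ∀ i : Fin s,
        G.Walk (ξ ⟨σ, Nat.le_of_succ_le hσ⟩ i) (ξ ⟨true :: σ, by simpa using hσ⟩ i),
      IsLinkage G I Q)

/-- The vertex set of the `η`-torso at the major vertex `σ` of `T_h`: the union of the bags
`X t - I` over all `t` such that the path in `Tr` from `t` to `η σ` contains none of the
images of the three minor neighbors of `σ` as an internal vertex. -/
def torsoSet {V T : Type*} (Tr : SimpleGraph T) (X : T → Finset V) {h : ℕ}
    (η : TVert h → T) (I : Finset V) (σ : List Bool) (hσ : σ.length + 1 ≤ h) : Set V :=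
  {v | v ∉ I ∧ ∃ t : T,
    (∀ p : Tr.Walk t (η (Sum.inr ⟨σ, hσ⟩)), p.IsPath →
      ∀ u : T,
        (u = η (Sum.inl ⟨σ, Nat.le_of_succ_le hσ⟩) ∨
         u = η (Sum.inl ⟨false :: σ, by simpa using hσ⟩) ∨
         u = η (Sum.inl ⟨true :: σ, by simpa using hσ⟩)) →
        u ∈ p.support → u = t ∨ u = η (Sum.inr ⟨σ, hσ⟩)) ∧
    v ∈ X t}

/-- `H` is a tripod in `G` with all vertices in `S`, center `c` and feet `f₁, f₂, f₃`:
the union of three paths from `c` to the feet, pairwise disjoint except for `c`,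
at least two of which have length at least one. -/
def IsTripodOn {V : Type*} (G : SimpleGraph V) (S : Set V) (H : G.Subgraph)
    (c f₁ f₂ f₃ : V) : Prop :=
  ∃ (W₁ : G.Walk c f₁) (W₂ : G.Walk c f₂) (W₃ : G.Walk c f₃),
    W₁.IsPath ∧ W₂.IsPath ∧ W₃.IsPath ∧
    (∀ v ∈ W₁.support, v ∈ S) ∧ (∀ v ∈ W₂.support, v ∈ S) ∧ (∀ v ∈ W₃.support, v ∈ S) ∧
    (∀ v, v ∈ W₁.support → v ∈ W₂.support → v = c) ∧
    (∀ v, v ∈ W₁.support → v ∈ W₃.support → v = c) ∧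
    (∀ v, v ∈ W₂.support → v ∈ W₃.support → v = c) ∧
    ((1 ≤ W₁.length ∧ 1 ≤ W₂.length) ∨ (1 ≤ W₁.length ∧ 1 ≤ W₃.length) ∨
      (1 ≤ W₂.length ∧ 1 ≤ W₃.length)) ∧
    H = W₁.toSubgraph ⊔ W₂.toSubgraph ⊔ W₃.toSubgraph

/-- The major vertex `σ` has property `A_{ij}` in the ordered cascade `η` with orderings
`ξ`: there are two disjoint tripods in the `η`-torso at `σ`, with feet as prescribed. -/
def HasPropA {V T : Type*} (G : SimpleGraph V) (Tr : SimpleGraph T) (X : T → Finset V)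
    {h s : ℕ} (η : TVert h → T) (I : Finset V) (ξ : MVert h → Fin s → V)
    (σ : List Bool) (hσ : σ.length + 1 ≤ h) (i j : Fin s) : Prop :=
  ∃ (Li Lj : G.Subgraph) (ci cj : V),
    (∃ m₂ m₃ : Fin s, (m₂ = i ∨ m₂ = j) ∧ (m₃ = i ∨ m₃ = j) ∧
      IsTripodOn G (torsoSet Tr X η I σ hσ) Li ci
        (ξ ⟨σ, Nat.le_of_succ_le hσ⟩ i)
        (ξ ⟨false :: σ, by simpa using hσ⟩ m₂)
        (ξ ⟨true :: σ, by simpa using hσ⟩ m₃)) ∧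
    (∃ m₂ m₃ : Fin s, (m₂ = i ∨ m₂ = j) ∧ (m₃ = i ∨ m₃ = j) ∧
      IsTripodOn G (torsoSet Tr X η I σ hσ) Lj cj
        (ξ ⟨σ, Nat.le_of_succ_le hσ⟩ j)
        (ξ ⟨false :: σ, by simpa using hσ⟩ m₂)
        (ξ ⟨true :: σ, by simpa using hσ⟩ m₃)) ∧
    Disjoint Li.verts Lj.verts

/-- The major vertex `σ` has property `B_{ij}`: there are two tripods `L_i`, `L_j` in the
`η`-torso at `σ`, with feet `v_{m,1}, v_{m,2}, v_{m,3}` where `{v_{i,y}, v_{j,y}}` equals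
`{ξ_{t_y} i, ξ_{t_y} j}` for each `y`, which intersect exactly in a path that is the
intersection of the branch of `L_i` to `v_{i,3}` and the branch of `L_j` to `v_{j,2}`,
and which avoids both centers. -/
def HasPropB {V T : Type*} (G : SimpleGraph V) (Tr : SimpleGraph T) (X : T → Finset V)
    {h s : ℕ} (η : TVert h → T) (I : Finset V) (ξ : MVert h → Fin s → V)
    (σ : List Bool) (hσ : σ.length + 1 ≤ h) (i j : Fin s) : Prop :=
  ∃ (vi vj : Fin 3 → V) (ci cj : V)
    (Wi : ∀ y : Fin 3, G.Walk ci (vi y)) (Wj : ∀ y : Fin 3, G.Walk cj (vj y)),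
    (∀ y : Fin 3, ({vi y, vj y} : Set V) =
      {(![ξ ⟨σ, Nat.le_of_succ_le hσ⟩,
          ξ ⟨false :: σ, by simpa using hσ⟩,
          ξ ⟨true :: σ, by simpa using hσ⟩] : Fin 3 → Fin s → V) y i,
       (![ξ ⟨σ, Nat.le_of_succ_le hσ⟩,
          ξ ⟨false :: σ, by simpa using hσ⟩,
          ξ ⟨true :: σ, by simpa using hσ⟩] : Fin 3 → Fin s → V) y j}) ∧
    (∀ y, (Wi y).IsPath) ∧ (∀ y, (Wj y).IsPath) ∧
    (∀ y, ∀ v ∈ (Wi y).support, v ∈ torsoSet Tr X η I σ hσ) ∧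
    (∀ y, ∀ v ∈ (Wj y).support, v ∈ torsoSet Tr X η I σ hσ) ∧
    (∀ y y' : Fin 3, y ≠ y' → ∀ v, v ∈ (Wi y).support → v ∈ (Wi y').support → v = ci) ∧
    (∀ y y' : Fin 3, y ≠ y' → ∀ v, v ∈ (Wj y).support → v ∈ (Wj y').support → v = cj) ∧
    ((1 ≤ (Wi 0).length ∧ 1 ≤ (Wi 1).length) ∨ (1 ≤ (Wi 0).length ∧ 1 ≤ (Wi 2).length) ∨
      (1 ≤ (Wi 1).length ∧ 1 ≤ (Wi 2).length)) ∧
    ((1 ≤ (Wj 0).length ∧ 1 ≤ (Wj 1).length) ∨ (1 ≤ (Wj 0).length ∧ 1 ≤ (Wj 2).length) ∨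
      (1 ≤ (Wj 1).length ∧ 1 ≤ (Wj 2).length)) ∧
    (((Wi 0).toSubgraph ⊔ (Wi 1).toSubgraph ⊔ (Wi 2).toSubgraph) ⊓
      ((Wj 0).toSubgraph ⊔ (Wj 1).toSubgraph ⊔ (Wj 2).toSubgraph)
        = (Wi 2).toSubgraph ⊓ (Wj 1).toSubgraph) ∧
    ∃ (x y : V) (p : G.Walk x y), p.IsPath ∧
      (Wi 2).toSubgraph ⊓ (Wj 1).toSubgraph = p.toSubgraph ∧
      ci ∉ p.support ∧ cj ∉ p.support

/-- The major vertex `σ` has property `AB_{ij}`: in the `η`-torso at `σ` there are disjoint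
paths `L_i, L_j` from `ξ_{t₁}(m)` to `ξ_{t₂}(m)` and disjoint paths `R_i, R_j` from
`ξ_{t₁}(m)` to `ξ_{t₃}(m)`, for `m ∈ {i, j}`. -/
def HasPropAB {V T : Type*} (G : SimpleGraph V) (Tr : SimpleGraph T) (X : T → Finset V)
    {h s : ℕ} (η : TVert h → T) (I : Finset V) (ξ : MVert h → Fin s → V)
    (σ : List Bool) (hσ : σ.length + 1 ≤ h) (i j : Fin s) : Prop :=
  ∃ (Li : G.Walk (ξ ⟨σ, Nat.le_of_succ_le hσ⟩ i) (ξ ⟨false :: σ, by simpa using hσ⟩ i))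
    (Lj : G.Walk (ξ ⟨σ, Nat.le_of_succ_le hσ⟩ j) (ξ ⟨false :: σ, by simpa using hσ⟩ j))
    (Ri : G.Walk (ξ ⟨σ, Nat.le_of_succ_le hσ⟩ i) (ξ ⟨true :: σ, by simpa using hσ⟩ i))
    (Rj : G.Walk (ξ ⟨σ, Nat.le_of_succ_le hσ⟩ j) (ξ ⟨true :: σ, by simpa using hσ⟩ j)),
    Li.IsPath ∧ Lj.IsPath ∧ Ri.IsPath ∧ Rj.IsPath ∧
    (∀ v ∈ Li.support, v ∈ torsoSet Tr X η I σ hσ) ∧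
    (∀ v ∈ Lj.support, v ∈ torsoSet Tr X η I σ hσ) ∧
    (∀ v ∈ Ri.support, v ∈ torsoSet Tr X η I σ hσ) ∧
    (∀ v ∈ Rj.support, v ∈ torsoSet Tr X η I σ hσ) ∧
    (∀ v ∈ Li.support, v ∉ Lj.support) ∧
    (∀ v ∈ Ri.support, v ∉ Rj.support)

/-- A monotone homeomorphic embedding `T_a ↪ T_h`: the minor root maps to the minor root,
and for every major vertex with trinity `(t₁, t₂, t₃)`, the images of `t₂` and `t₃` are the
left and right neighbors of the (major) image of the vertex. -/
def IsMonotoneEmb (a h : ℕ) (γ : TVert a → TVert h) : Prop :=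
  IsHomeoEmb (Tgraph a) (Tgraph h) γ ∧
  γ (Sum.inl ⟨[], Nat.zero_le a⟩) = Sum.inl ⟨[], Nat.zero_le h⟩ ∧
  ∀ (σ : List Bool) (hσ : σ.length + 1 ≤ a),
    ∃ (τ : List Bool) (hτ : τ.length + 1 ≤ h),
      γ (Sum.inr ⟨σ, hσ⟩) = Sum.inr ⟨τ, hτ⟩ ∧
      γ (Sum.inl ⟨false :: σ, by simpa using hσ⟩) = Sum.inl ⟨false :: τ, by simpa using hτ⟩ ∧
      γ (Sum.inl ⟨true :: σ, by simpa using hσ⟩) = Sum.inl ⟨true :: τ, by simpa using hτ⟩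

namespace NF

variable {V : Type}

/-- connected set, cut version -/
def CC (H : SimpleGraph V) (S : Set V) : Prop :=
  S.Nonempty ∧ ∀ U : Set V, U ⊆ S → U.Nonempty → (S \ U).Nonempty →
    ∃ a ∈ U, ∃ b ∈ S \ U, H.Adj a b

def Two (H : SimpleGraph V) (S : Set V) (s : V) : Prop :=
  ∃ a ∈ S, ∃ b ∈ S, a ≠ b ∧ H.Adj s a ∧ H.Adj s b

def Core (H : SimpleGraph V) (S : Set V) : Prop :=
  S.Nonempty ∧ ∀ s ∈ S, Two H S s

def MinorIn {W : Type} (K : SimpleGraph W) (H : SimpleGraph V) (X : Set V) : Prop :=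
  ∃ f : W → Set V, (∀ w, CC H (f w)) ∧ (∀ w₁ w₂ : W, w₁ ≠ w₂ → Disjoint (f w₁) (f w₂)) ∧
    (∀ w₁ w₂ : W, K.Adj w₁ w₂ → ∃ v₁ ∈ f w₁, ∃ v₂ ∈ f w₂, H.Adj v₁ v₂) ∧ ∀ w, f w ⊆ X

def EE (H : SimpleGraph V) (S T : Set V) : Prop := ∃ a ∈ S, ∃ b ∈ T, H.Adj a b

theorem EE.symm {H : SimpleGraph V} {S T : Set V} (h : EE H S T) : EE H T S := by
  obtain ⟨a, ha, b, hb, hab⟩ := h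
  exact ⟨b, hb, a, ha, hab.symm⟩

theorem EE.mono {H : SimpleGraph V} {S T S' T' : Set V} (h : EE H S T) (h1 : S ⊆ S')
    (h2 : T ⊆ T') : EE H S' T' := by
  obtain ⟨a, ha, b, hb, hab⟩ := h
  exact ⟨a, h1 ha, b, h2 hb, hab⟩

theorem CC.connected {H : SimpleGraph V} {S : Set V} (h : CC H S) : (H.induce S).Connected := by
  obtain ⟨⟨s, hs⟩, h⟩ := h
  rw [SimpleGraph.connected_iff_exists_forall_reachable]
  refine ⟨⟨s, hs⟩, ?_⟩
  by_contra! hc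
  obtain ⟨w, hw⟩ := hc
  obtain ⟨a, ⟨ha, har⟩, b, ⟨hb, hbr⟩, hab⟩ := h {u | ∃ hu : u ∈ S, (H.induce S).Reachable ⟨s, hs⟩ ⟨u, hu⟩}
    (fun u hu => hu.1) ⟨s, hs, SimpleGraph.Reachable.refl _⟩
    ⟨w.1, w.2, fun hh => hw hh.2⟩
  apply hbr
  refine ⟨hb, har.trans ?_⟩
  apply SimpleGraph.Adj.reachable
  simpa using hab

theorem CC.single (H : SimpleGraph V) (x : V) : CC H {x} := by
  refine ⟨⟨x, rfl⟩, ?_⟩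
  rintro U hU ⟨u, hu⟩ ⟨w, hw, hwU⟩
  have := hU hu
  simp only [Set.mem_singleton_iff] at this hw
  subst this; subst hw
  exact absurd hu hwU

theorem CC.union {H : SimpleGraph V} {S T : Set V} (hS : CC H S) (hT : CC H T)
    (h : (S ∩ T).Nonempty ∨ EE H S T) : CC H (S ∪ T) := by
  refine ⟨hS.1.mono Set.subset_union_left, ?_⟩
  rintro U hU hUn ⟨w, hw, hwU⟩
  by_cases h1 : (U ∩ S).Nonempty ∧ (S \ U).Nonempty
  · obtain ⟨a, ha, b, hb, hab⟩ := hS.2 (U ∩ S) Set.inter_subset_right h1.1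
      (h1.2.mono (fun x hx => ⟨hx.1, fun hh => hx.2 hh.1⟩))
    exact ⟨a, ha.1, b, ⟨Or.inl hb.1, fun hh => hb.2 ⟨hh, hb.1⟩⟩, hab⟩
  by_cases h2 : (U ∩ T).Nonempty ∧ (T \ U).Nonempty
  · obtain ⟨a, ha, b, hb, hab⟩ := hT.2 (U ∩ T) Set.inter_subset_right h2.1
      (h2.2.mono (fun x hx => ⟨hx.1, fun hh => hx.2 hh.1⟩))
    exact ⟨a, ha.1, b, ⟨Or.inr hb.1, fun hh => hb.2 ⟨hh, hb.1⟩⟩, hab⟩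
  have key1 : ∀ x ∈ S, ∀ y ∈ S, x ∈ U → y ∈ U := by
    intro x hx y hy hxU
    by_contra hyU
    exact h1 ⟨⟨x, hxU, hx⟩, ⟨y, hy, hyU⟩⟩
  have key2 : ∀ x ∈ T, ∀ y ∈ T, x ∈ U → y ∈ U := by
    intro x hx y hy hxU
    by_contra hyU
    exact h2 ⟨⟨x, hxU, hx⟩, ⟨y, hy, hyU⟩⟩
  obtain ⟨u, hu⟩ := hUn
  rcases h with ⟨m, hmS, hmT⟩ | ⟨a, ha, b, hb, hab⟩
  · exfalso
    have hu' := hU hu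
    have : m ∈ U := by
      rcases hu' with h' | h'
      · exact key1 _ h' _ hmS hu
      · exact key2 _ h' _ hmT hu
    rcases hw with h' | h'
    · exact hwU (key1 _ hmS _ h' this)
    · exact hwU (key2 _ hmT _ h' this)
  · by_cases haU : a ∈ U <;> by_cases hbU : b ∈ U
    · exfalso
      rcases hw with h' | h'
      · exact hwU (key1 _ ha _ h' haU)
      · exact hwU (key2 _ hb _ h' hbU)
    · exact ⟨a, haU, b, ⟨Or.inr hb, hbU⟩, hab⟩
    · exact ⟨b, hbU, a, ⟨Or.inl ha, haU⟩, hab.symm⟩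
    · exfalso
      rcases hU hu with h' | h'
      · exact haU (key1 _ h' _ ha hu)
      · exact hbU (key2 _ h' _ hb hu)

theorem exists_comp (H : SimpleGraph V) (F : Set V) (a : V) (ha : a ∈ F) :
    ∃ T ⊆ F, a ∈ T ∧ CC H T ∧ ∀ t ∈ T, ∀ u ∈ F, H.Adj t u → u ∈ T := by
  let T : Set V := {u | ∃ S ⊆ F, a ∈ S ∧ u ∈ S ∧ CC H S}
  have haT : a ∈ T := ⟨{a}, by simpa using ha, rfl, rfl, CC.single H a⟩
  refine ⟨T, ?_, haT, ⟨⟨a, haT⟩, ?_⟩, ?_⟩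
  · rintro u ⟨S, hS, -, hu, -⟩
    exact hS hu
  · rintro U hU ⟨u, hu⟩ ⟨w, hw, hwU⟩
    -- find S containing a and a point on the other side
    have : ∃ S ⊆ T, CC H S ∧ (S ∩ U).Nonempty ∧ (S \ U).Nonempty := by
      by_cases haU : a ∈ U
      · obtain ⟨S, hS, haS, hwS, hSC⟩ := hw
        exact ⟨S, fun s hs => ⟨S, hS, haS, hs, hSC⟩, hSC, ⟨a, haS, haU⟩, ⟨w, hwS, hwU⟩⟩
      · obtain ⟨S, hS, haS, hwS, hSC⟩ := hU hu
        exact ⟨S, fun s hs => ⟨S, hS, haS, hs, hSC⟩, hSC, ⟨u, hwS, hu⟩, ⟨a, haS, haU⟩⟩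
    obtain ⟨S, hST, hSC, h1, h2⟩ := this
    obtain ⟨p, hp, q, hq, hpq⟩ := hSC.2 (S ∩ U) Set.inter_subset_left h1
      (h2.mono (fun x hx => ⟨hx.1, fun hh => hx.2 hh.2⟩))
    exact ⟨p, hp.2, q, ⟨hST hq.1, fun hh => hq.2 ⟨hq.1, hh⟩⟩, hpq⟩
  · rintro t ⟨S, hS, haS, htS, hSC⟩ u hu htu
    refine ⟨S ∪ {u}, ?_, Or.inl haS, Or.inr rfl,
      hSC.union (CC.single H u) (Or.inr ⟨t, htS, u, rfl, htu⟩)⟩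
    apply Set.union_subset hS
    simpa using hu

theorem CC.ee_compl {H : SimpleGraph V} {S A B : Set V} (hS : CC H S) (hA : A.Nonempty)
    (hB : B.Nonempty) (hAB : A ∪ B = S) (hd : Disjoint A B) : EE H A B := by
  subst hAB
  have h : (A ∪ B) \ A = B := by
    rw [Set.union_sdiff_left]
    exact hd.symm.sdiff_eq_left
  have := hS.2 A Set.subset_union_left hA (by rw [h]; exact hB)
  rw [h] at this
  exact this

theorem split {H : SimpleGraph V} {S : Set V} (hS : CC H S) {p q : V} (hp : p ∈ S) (hq : q ∈ S)
    (hpq : p ≠ q) : ∃ A B : Set V, A ∪ B = S ∧ Disjoint A B ∧ CC H A ∧ CC H B ∧ p ∈ A ∧ q ∈ B ∧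
      EE H A B := by
  obtain ⟨A, hA, hpA, hAC, hcl⟩ := exists_comp H (S \ {q}) p ⟨hp, hpq⟩
  have hAS : A ⊆ S := fun x hx => (hA hx).1
  have hqA : q ∉ A := fun h => (hA h).2 rfl
  have hqB : q ∈ S \ A := ⟨hq, hqA⟩
  have hu : A ∪ S \ A = S := Set.union_sdiff_cancel hAS
  have key : ∀ U : Set V, U ⊆ S \ A → U.Nonempty → q ∉ U →
      ∃ a ∈ U, ∃ b ∈ (S \ A) \ U, H.Adj a b := by
    intro U hU hUn hqU
    obtain ⟨a, ha, b, hb, hab⟩ := hS.2 U (fun x hx => (hU hx).1) hUn ⟨q, hq, hqU⟩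
    refine ⟨a, ha, b, ⟨⟨hb.1, fun hbA => ?_⟩, hb.2⟩, hab⟩
    refine (hU ha).2 (hcl b hbA a ⟨(hU ha).1, ?_⟩ hab.symm)
    rintro rfl
    exact hqU ha
  refine ⟨A, S \ A, hu, Set.disjoint_sdiff_right, hAC, ⟨⟨q, hqB⟩, ?_⟩, hpA, hqB,
    hS.ee_compl ⟨p, hpA⟩ ⟨q, hqB⟩ hu Set.disjoint_sdiff_right⟩
  intro U hU hUn hUc
  by_cases hqU : q ∈ U
  · obtain ⟨a, ha, b, hb, hab⟩ := key ((S \ A) \ U) Set.sdiff_subset hUc (fun h => h.2 hqU)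
    refine ⟨b, ?_, a, ha, hab.symm⟩
    by_contra hbU
    exact hb.2 ⟨hb.1, hbU⟩
  · exact key U hU hUn hqU

theorem CC.remove_leaf {H : SimpleGraph V} {T : Set V} (hT : CC H T) {a : V}
    (hl : ¬ Two H T a) (hn : (T \ {a}).Nonempty) : CC H (T \ {a}) := by
  refine ⟨hn, ?_⟩
  intro U hU hUn hUc
  by_cases h : ∃ b ∈ U, H.Adj a b
  · obtain ⟨b, hb, hab⟩ := h
    have hsub : (T \ {a}) \ U ⊆ T := fun x hx => hx.1.1
    obtain ⟨p, hp, q, hq, hpq⟩ := hT.2 ((T \ {a}) \ U) hsub hUc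
      ⟨b, (hU hb).1, fun hh => hh.2 hb⟩
    have hqa : q ≠ a := by
      rintro rfl
      apply hl
      refine ⟨b, (hU hb).1, p, hp.1.1, ?_, hab, hpq.symm⟩
      rintro rfl
      exact hp.2 hb
    refine ⟨q, ?_, p, hp, hpq.symm⟩
    by_contra hqU
    exact hq.2 ⟨⟨hq.1, hqa⟩, hqU⟩
  · push Not at h
    obtain ⟨p, hp, q, hq, hpq⟩ := hT.2 U (fun x hx => (hU hx).1) hUn
      (hUc.mono (fun x hx => ⟨hx.1.1, hx.2⟩))
    refine ⟨p, hp, q, ⟨⟨hq.1, ?_⟩, hq.2⟩, hpq⟩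
    rintro rfl
    exact h p hp hpq.symm

/-- almost core contains core -/
theorem almost_core [Finite V] {H : SimpleGraph V} : ∀ n : ℕ, ∀ S : Set V, S.ncard = n →
    ∀ s ∈ S, (∃ t ∈ S, H.Adj s t) → (∀ u ∈ S, u ≠ s → Two H S u) → ∃ C ⊆ S, Core H C := by
  intro n
  induction n with
  | zero =>
    intro S hS s hs
    rw [Set.ncard_eq_zero] at hS
    simp [hS] at hs
  | succ n ih =>
    rintro S hS s hs ⟨t, ht, hst⟩ h
    by_cases h2 : Two H S s
    · refine ⟨S, le_rfl, ⟨s, hs⟩, fun u hu => ?_⟩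
      by_cases hus : u = s
      · rwa [hus]
      · exact h u hu hus
    · have huniq : ∀ u ∈ S, H.Adj s u → u = t := by
        intro u hu hsu
        by_contra hne
        exact h2 ⟨u, hu, t, ht, hne, hsu, hst⟩
      have htS : t ∈ S \ {s} := ⟨ht, hst.ne'⟩
      obtain ⟨C, hC, hCC⟩ := ih (S \ {s}) (by
          rw [Set.ncard_sdiff_singleton_of_mem hs, hS]; rfl) t htS
        (by
          obtain ⟨a, ha, b, hb, hab, hta, htb⟩ := h t ht hst.ne'
          by_cases has : a = s
          · exact ⟨b, ⟨hb, fun hh => hab (has.trans hh.symm)⟩, htb⟩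
          · exact ⟨a, ⟨ha, has⟩, hta⟩)
        (by
          rintro u ⟨hu, hus⟩ hut
          obtain ⟨a, ha, b, hb, hab, hta, htb⟩ := h u hu hus
          refine ⟨a, ⟨ha, ?_⟩, b, ⟨hb, ?_⟩, hab, hta, htb⟩
          · rintro rfl
            exact hut (huniq u hu hta.symm)
          · rintro rfl
            exact hut (huniq u hu htb.symm))
      exact ⟨C, hC.trans Set.sdiff_subset, hCC⟩

def Loop (H : SimpleGraph V) (w : V) (P : Set V) : Prop := w ∉ P ∧ CC H P ∧ Two H P w

theorem core_loop [Finite V] {H : SimpleGraph V} {S : Set V} (hS : Core H S) :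
    ∃ w ∈ S, ∃ P ⊆ S, Loop H w P := by
  by_contra! hc
  have key : ∀ n : ℕ, ∃ P ⊆ S, CC H P ∧ n < P.ncard ∧ ∃ w ∈ S, w ∉ P ∧ ∃ p ∈ P, H.Adj w p := by
    intro n
    induction n with
    | zero =>
      obtain ⟨s, hs⟩ := hS.1
      obtain ⟨a, ha, b, hb, hab, hsa, hsb⟩ := hS.2 s hs
      exact ⟨{a}, by simpa using ha, CC.single H a, by simp, s, hs, hsa.ne, a, rfl, hsa⟩
    | succ n ih =>
      obtain ⟨P, hP, hPC, hn, w, hw, hwP, p, hp, hwp⟩ := ih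
      have hex : ∃ b ∈ S, b ∉ P ∧ H.Adj w b := by
        by_contra! hb
        obtain ⟨a, ha, b, hb', hab, hwa, hwb⟩ := hS.2 w hw
        refine hc w hw P hP ⟨hwP, hPC, a, ?_, b, ?_, hab, hwa, hwb⟩
        · by_contra h
          exact hb a ha h hwa
        · by_contra h
          exact hb b hb' h hwb
      obtain ⟨b, hb, hbP, hwb⟩ := hex
      refine ⟨P ∪ {w}, Set.union_subset hP (by simpa using hw),
        hPC.union (CC.single H w) (Or.inr ⟨p, hp, w, rfl, hwp.symm⟩), ?_, b, hb, ?_, w, Or.inr rfl,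
        hwb.symm⟩
      · rw [Set.union_singleton, Set.ncard_insert_of_notMem hwP]
        omega
      · rintro (h | h)
        · exact hbP h
        · exact hwb.ne h.symm
  obtain ⟨P, hP, -, hn, -⟩ := key S.ncard
  exact absurd (Set.ncard_le_ncard hP) (by omega)

/-- a core through `y` gives a core avoiding `y` or a loop at `y` -/
theorem core_loop_at [Finite V] {H : SimpleGraph V} {S : Set V} (hS : Core H S) {y : V}
    (hy : y ∈ S) : (∃ C ⊆ S \ {y}, Core H C) ∨ ∃ P ⊆ S \ {y}, Loop H y P := by
  obtain ⟨a, ha, b, hb, hab, hya, hyb⟩ := hS.2 y hy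
  obtain ⟨T, hT, haT, hTC, hcl⟩ := exists_comp H (S \ {y}) a ⟨ha, hya.ne'⟩
  by_cases h2 : Two H T y
  · exact Or.inr ⟨T, hT, fun h => (hT h).2 rfl, hTC, h2⟩
  · left
    have huniq : ∀ u ∈ T, H.Adj y u → u = a := by
      intro u hu hsu
      by_contra hne
      exact h2 ⟨u, hu, a, haT, hne, hsu, hya⟩
    obtain ⟨C, hC, hCC⟩ := almost_core (H := H) _ T rfl a haT
      (by
        obtain ⟨c, hc, d, hd, hcd, hac, had⟩ := hS.2 a ha
        by_cases hcy : c = y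
        · exact ⟨d, hcl a haT d ⟨hd, fun hh => hcd (hcy.trans hh.symm)⟩ had, had⟩
        · exact ⟨c, hcl a haT c ⟨hc, hcy⟩ hac, hac⟩)
      (by
        intro u hu hua
        obtain ⟨c, hc, d, hd, hcd, hac, had⟩ := hS.2 u (hT hu).1
        refine ⟨c, hcl u hu c ⟨hc, ?_⟩ hac, d, hcl u hu d ⟨hd, ?_⟩ had, hcd, hac, had⟩
        · rintro rfl
          exact hua (huniq u hu hac.symm)
        · rintro rfl
          exact hua (huniq u hu had.symm))
    exact ⟨C, hC.trans hT, hCC⟩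

theorem mkK4 {H : SimpleGraph V} {X A B C D : Set V} (hA : CC H A) (hB : CC H B) (hC : CC H C)
    (hD : CC H D) (h1 : Disjoint A B) (h2 : Disjoint A C) (h3 : Disjoint A D) (h4 : Disjoint B C)
    (h5 : Disjoint B D) (h6 : Disjoint C D) (e1 : EE H A B) (e2 : EE H A C) (e3 : EE H A D)
    (e4 : EE H B C) (e5 : EE H B D) (e6 : EE H C D) (xA : A ⊆ X) (xB : B ⊆ X) (xC : C ⊆ X)
    (xD : D ⊆ X) : MinorIn K4 H X := by
  refine ⟨![A, B, C, D], ?_, ?_, ?_, ?_⟩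
  · intro w; fin_cases w <;> assumption
  · intro w₁ w₂ hne
    fin_cases w₁ <;> fin_cases w₂ <;> first | exact absurd rfl hne | assumption | (apply Disjoint.symm; assumption)
  · intro w₁ w₂ hne
    fin_cases w₁ <;> fin_cases w₂ <;> first | exact absurd rfl hne.ne | assumption | (apply EE.symm; assumption)
  · intro w; fin_cases w <;> assumption

theorem mkC32 {H : SimpleGraph V} {X A B C D E F : Set V} (hA : CC H A) (hB : CC H B) (hC : CC H C)
    (hD : CC H D) (hE : CC H E) (hF : CC H F)
    (d1 : Disjoint A B) (d2 : Disjoint A C) (d3 : Disjoint B C)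
    (d4 : Disjoint D E) (d5 : Disjoint D F) (d6 : Disjoint E F)
    (dd : Disjoint (A ∪ B ∪ C) (D ∪ E ∪ F))
    (e1 : EE H A B) (e2 : EE H A C) (e3 : EE H B C)
    (e4 : EE H D E) (e5 : EE H D F) (e6 : EE H E F)
    (xA : A ⊆ X) (xB : B ⊆ X) (xC : C ⊆ X)
    (xD : D ⊆ X) (xE : E ⊆ X) (xF : F ⊆ X) : MinorIn C32 H X := by
  simp only [Set.disjoint_union_left, Set.disjoint_union_right] at dd
  obtain ⟨⟨⟨⟨d7, d8⟩, d9⟩, ⟨⟨d10, d11⟩, d12⟩⟩, ⟨⟨d13, d14⟩, d15⟩⟩ := dd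
  refine ⟨fun w => ![![A, B, C], ![D, E, F]] w.1 w.2, ?_, ?_, ?_, ?_⟩
  · rintro ⟨w, w'⟩; fin_cases w <;> fin_cases w' <;> assumption
  · rintro ⟨w, w'⟩ ⟨u, u'⟩ hne
    fin_cases w <;> fin_cases w' <;> fin_cases u <;> fin_cases u' <;>
      first | exact absurd rfl hne | assumption | (apply Disjoint.symm; assumption)
  · rintro ⟨w, w'⟩ ⟨u, u'⟩ hne
    have h1 : w = u := by
      simp only [C32, SimpleGraph.fromRel_adj] at hne
      rcases hne.2 with h | h
      · exact h
      · exact h.symm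
    subst h1
    have h2 : w' ≠ u' := by
      rintro rfl
      exact hne.ne rfl
    clear hne
    fin_cases w <;> fin_cases w' <;> fin_cases u' <;>
      first | exact absurd rfl h2 | assumption | (apply EE.symm; assumption)
  · rintro ⟨w, w'⟩; fin_cases w <;> fin_cases w' <;> assumption

theorem mkA {H : SimpleGraph V} {X T A B C : Set V} {x y z : V}
    (hA : CC H A) (hB : CC H B) (hC : CC H C)
    (d1 : Disjoint A B) (d2 : Disjoint A C) (d3 : Disjoint B C)
    (tA : A ⊆ T) (tB : B ⊆ T) (tC : C ⊆ T) (hT : T ⊆ X) (hx : x ∈ X) (hy : y ∈ X) (hz : z ∈ X)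
    (xT : x ∉ T) (yT : y ∉ T) (zT : z ∉ T) (hxy : H.Adj x y) (hxz : H.Adj x z) (hyz : H.Adj y z)
    (e1 : EE H A B) (e2 : EE H A C) (e3 : EE H {y} A) (e4 : EE H {z} A) (e5 : EE H {y} B)
    (e6 : EE H {z} C) : MinorIn graphA H X := by
  have s1 : ∀ {u : V} {S : Set V}, u ∉ T → S ⊆ T → Disjoint {u} S := by
    intro u S hu hS
    rw [Set.disjoint_singleton_left]
    exact fun h => hu (hS h)
  have s2 : ∀ {u w : V}, u ≠ w → Disjoint ({u} : Set V) {w} := by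
    intro u w h; simpa using h
  have s3 : ∀ {u w : V}, H.Adj u w → EE H {u} {w} := fun h => ⟨_, rfl, _, rfl, h⟩
  refine ⟨![{y}, {x}, {z}, C, A, B], ?_, ?_, ?_, ?_⟩
  · intro w; fin_cases w <;> first | assumption | exact CC.single _ _
  · have a1 := s1 xT tA
    have a2 := s1 xT tB
    have a3 := s1 xT tC
    have a4 := s1 yT tA
    have a5 := s1 yT tB
    have a6 := s1 yT tC
    have a7 := s1 zT tA
    have a8 := s1 zT tB
    have a9 := s1 zT tC
    have b1 := s2 hxy.ne
    have b2 := s2 hxz.ne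
    have b3 := s2 hyz.ne
    intro w₁ w₂ hne
    fin_cases w₁ <;> fin_cases w₂ <;> first | exact absurd rfl hne | assumption | (apply Disjoint.symm; assumption)
  · have b1 := s3 hxy
    have b2 := s3 hxz
    have b3 := s3 hyz
    intro w₁ w₂ hne
    simp only [graphA, SimpleGraph.fromEdgeSet_adj] at hne
    fin_cases w₁ <;> fin_cases w₂ <;> first | assumption | (apply EE.symm; assumption) | (exfalso; revert hne; simp)
  · have c1 : {x} ⊆ X := by simpa using hx
    have c2 : {y} ⊆ X := by simpa using hy
    have c3 : {z} ⊆ X := by simpa using hz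
    have c4 := tA.trans hT
    have c5 := tB.trans hT
    have c6 := tC.trans hT
    intro w; fin_cases w <;> assumption

/-- The two-label lemma. -/
theorem labels {H : SimpleGraph V} {X T : Set V} {x y z : V} (hTC : CC H T)
    (hT : T ⊆ X) (hx : x ∈ X) (hy : y ∈ X) (hz : z ∈ X)
    (xT : x ∉ T) (yT : y ∉ T) (zT : z ∉ T) (hxy : H.Adj x y) (hxz : H.Adj x z) (hyz : H.Adj y z)
    (h2y : Two H T y) (h2z : Two H T z) : MinorIn K4 H X ∨ MinorIn graphA H X := by
  have K : ∀ A B : Set V, A ⊆ T → B ⊆ T → CC H A → CC H B → Disjoint A B → EE H A B →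
      EE H {y} A → EE H {y} B → EE H {z} A → EE H {z} B → MinorIn K4 H X := by
    intro A B hA hB cA cB dAB eAB e1 e2 e3 e4
    refine mkK4 (CC.single H y) (CC.single H z) cA cB (by simpa using hyz.ne) ?_ ?_ ?_ ?_ dAB
      ⟨y, rfl, z, rfl, hyz⟩ e1 e2 e3 e4 eAB (by simpa using hy) (by simpa using hz)
      (hA.trans hT) (hB.trans hT) <;> rw [Set.disjoint_singleton_left]
    · exact fun h => yT (hA h)
    · exact fun h => yT (hB h)
    · exact fun h => zT (hA h)
    · exact fun h => zT (hB h)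
  -- one-sided case
  have one : ∀ A B : Set V, A ∪ B = T → Disjoint A B → CC H A → CC H B → EE H A B →
      EE H {y} A → EE H {y} B → (∀ u ∈ T, H.Adj z u → u ∈ A) →
      MinorIn K4 H X ∨ MinorIn graphA H X := by
    intro A B hAB dAB cA cB eAB eyA eyB hzA
    obtain ⟨p, hp, q, hq, hpq, hzp, hzq⟩ := h2z
    obtain ⟨P, Q, hPQ, dPQ, cP, cQ, hpP, hqQ, ePQ⟩ := split cA (hzA p hp hzp) (hzA q hq hzq) hpq
    have tA : A ⊆ T := hAB ▸ Set.subset_union_left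
    have tB : B ⊆ T := hAB ▸ Set.subset_union_right
    have ezP : EE H {z} P := ⟨z, rfl, p, hpP, hzp⟩
    have ezQ : EE H {z} Q := ⟨z, rfl, q, hqQ, hzq⟩
    -- symmetric sub-lemma
    have sub : ∀ P Q : Set V, P ∪ Q = A → Disjoint P Q → CC H P → CC H Q → EE H P Q →
        EE H {z} P → EE H {z} Q → EE H {y} P → MinorIn K4 H X ∨ MinorIn graphA H X := by
      intro P Q hPQ dPQ cP cQ ePQ ezP ezQ eyP
      have aP : P ⊆ A := hPQ ▸ Set.subset_union_left
      have aQ : Q ⊆ A := hPQ ▸ Set.subset_union_right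
      by_cases hPB : EE H P B
      · right
        exact mkA cP cB cQ (dAB.mono_left aP) dPQ (dAB.mono_left aQ).symm (aP.trans tA) tB
          (aQ.trans tA) hT hx hy hz xT yT zT hxy hxz hyz hPB ePQ eyP ezP eyB ezQ
      · left
        have hQB : EE H Q B := by
          obtain ⟨a, ha, b, hb, hab⟩ := eAB
          rw [← hPQ] at ha
          rcases ha with ha | ha
          · exact absurd ⟨a, ha, b, hb, hab⟩ hPB
          · exact ⟨a, ha, b, hb, hab⟩
        refine K P (Q ∪ B) (aP.trans tA) (Set.union_subset (aQ.trans tA) tB) cP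
          (cQ.union cB (Or.inr hQB)) ?_ (ePQ.mono le_rfl Set.subset_union_left) eyP
          (eyB.mono le_rfl Set.subset_union_right) ezP (ezQ.mono le_rfl Set.subset_union_left)
        rw [Set.disjoint_union_right]
        exact ⟨dPQ, dAB.mono_left aP⟩
    obtain ⟨y', rfl, b, hb, hyb⟩ := id eyA
    rw [← hPQ] at hb
    rcases hb with hb | hb
    · exact sub P Q hPQ dPQ cP cQ ePQ ezP ezQ ⟨_, rfl, b, hb, hyb⟩
    · exact sub Q P (by rw [Set.union_comm]; exact hPQ) dPQ.symm cQ cP ePQ.symm ezQ ezP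
        ⟨_, rfl, b, hb, hyb⟩
  obtain ⟨p, hp, q, hq, hpq, hyp, hyq⟩ := h2y
  obtain ⟨A, B, hAB, dAB, cA, cB, hpA, hqB, eAB⟩ := split hTC hp hq hpq
  have eyA : EE H {y} A := ⟨y, rfl, p, hpA, hyp⟩
  have eyB : EE H {y} B := ⟨y, rfl, q, hqB, hyq⟩
  by_cases hzA : EE H {z} A
  · by_cases hzB : EE H {z} B
    · left
      exact K A B (hAB ▸ Set.subset_union_left) (hAB ▸ Set.subset_union_right) cA cB dAB eAB eyA eyB
        hzA hzB
    · refine one A B hAB dAB cA cB eAB eyA eyB ?_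
      intro u hu hzu
      rw [← hAB] at hu
      rcases hu with hu | hu
      · exact hu
      · exact absurd ⟨z, rfl, u, hu, hzu⟩ hzB
  · refine one B A (by rw [Set.union_comm]; exact hAB) dAB.symm cB cA eAB.symm eyB eyA ?_
    intro u hu hzu
    rw [← hAB] at hu
    rcases hu with hu | hu
    · exact absurd ⟨z, rfl, u, hu, hzu⟩ hzA
    · exact hu

theorem two_loops {H : SimpleGraph V} {X P Q : Set V} {y z : V} (hP : Loop H y P)
    (hQ : Loop H z Q) (hPX : P ⊆ X) (hQX : Q ⊆ X) (hy : y ∈ X) (hz : z ∈ X)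
    (hd : Disjoint ({y} ∪ P) ({z} ∪ Q)) : MinorIn C32 H X := by
  obtain ⟨hyP, cP, p, hp, q, hq, hpq, hyp, hyq⟩ := hP
  obtain ⟨hzQ, cQ, r, hr, s, hs, hrs, hzr, hzs⟩ := hQ
  obtain ⟨A, B, hAB, dAB, cA, cB, hpA, hqB, eAB⟩ := split cP hp hq hpq
  obtain ⟨C, D, hCD, dCD, cC, cD, hrC, hsD, eCD⟩ := split cQ hr hs hrs
  subst hAB
  subst hCD
  simp only [Set.mem_union, not_or] at hyP hzQ
  refine mkC32 (CC.single H y) cA cB (CC.single H z) cC cD ?_ ?_ dAB ?_ ?_ dCD ?_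
    ⟨y, rfl, p, hpA, hyp⟩ ⟨y, rfl, q, hqB, hyq⟩ eAB ⟨z, rfl, r, hrC, hzr⟩ ⟨z, rfl, s, hsD, hzs⟩ eCD
    (by simpa using hy) (Set.subset_union_left.trans hPX) (Set.subset_union_right.trans hPX)
    (by simpa using hz) (Set.subset_union_left.trans hQX) (Set.subset_union_right.trans hQX)
  · simpa using hyP.1
  · simpa using hyP.2
  · simpa using hzQ.1
  · simpa using hzQ.2
  · rw [Set.union_assoc, Set.union_assoc]
    exact hd

theorem triangle_loop {H : SimpleGraph V} {x y z : V} (hxy : H.Adj x y) (hxz : H.Adj x z)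
    (hyz : H.Adj y z) : Loop H x {y, z} := by
  refine ⟨?_, ?_, y, by simp, z, by simp, hyz.ne, hxy, hxz⟩
  · simp [hxy.ne, hxz.ne]
  · exact (CC.single H y).union (CC.single H z) (Or.inr ⟨y, rfl, z, rfl, hyz⟩)

theorem MinorIn.mono {W : Type} {K : SimpleGraph W} {H : SimpleGraph V} {X Y : Set V}
    (h : MinorIn K H X) (hXY : X ⊆ Y) : MinorIn K H Y := by
  obtain ⟨f, h1, h2, h3, h4⟩ := h
  exact ⟨f, h1, h2, h3, fun w => (h4 w).trans hXY⟩

theorem MinorIn.toMinor {W : Type} {K : SimpleGraph W} {H : SimpleGraph V} {X : Set V}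
    (h : MinorIn K H X) : IsMinor K H := by
  obtain ⟨f, h1, h2, h3, -⟩ := h
  exact ⟨f, fun w => (h1 w).1, fun w => (h1 w).connected, h2, h3⟩

theorem contract {W : Type} {K : SimpleGraph W} {H H' : SimpleGraph V} {X : Set V} {x y z : V}
    (hx : x ∈ X) (hxy : H.Adj x y) (hxz : H.Adj x z)
    (hH' : ∀ a b, H'.Adj a b → H.Adj a b ∨ (a = y ∧ b = z) ∨ (a = z ∧ b = y))
    (h : MinorIn K H' (X \ {x})) : MinorIn K H X := by
  classical
  obtain ⟨f, h1, h2, h3, h4⟩ := h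
  have hxf : ∀ w, x ∉ f w := fun w hw => (h4 w hw).2 rfl
  refine ⟨fun w => {u | u ∈ f w ∨ (u = x ∧ y ∈ f w)}, ?_, ?_, ?_, ?_⟩
  · intro w
    refine ⟨(h1 w).1.mono (fun u hu => Or.inl hu), ?_⟩
    rintro U hU hUn ⟨c, hc, hcU⟩
    by_cases hA : (U ∩ f w).Nonempty
    · by_cases hB : (f w \ U).Nonempty
      · obtain ⟨a, ha, b, hb, hab⟩ := (h1 w).2 (U ∩ f w) Set.inter_subset_right hA
          (hB.mono (fun u hu => ⟨hu.1, fun hh => hu.2 hh.1⟩))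
        have hbU : b ∉ U := fun hh => hb.2 ⟨hh, hb.1⟩
        rcases hH' a b hab with h | ⟨rfl, rfl⟩ | ⟨rfl, rfl⟩
        · exact ⟨a, ha.1, b, ⟨Or.inl hb.1, hbU⟩, h⟩
        · by_cases hxU : x ∈ U
          · exact ⟨x, hxU, b, ⟨Or.inl hb.1, hbU⟩, hxz⟩
          · exact ⟨a, ha.1, x, ⟨Or.inr ⟨rfl, ha.2⟩, hxU⟩, hxy.symm⟩
        · by_cases hxU : x ∈ U
          · exact ⟨x, hxU, b, ⟨Or.inl hb.1, hbU⟩, hxy⟩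
          · exact ⟨a, ha.1, x, ⟨Or.inr ⟨rfl, hb.1⟩, hxU⟩, hxz.symm⟩
      · rcases hc with hc | ⟨rfl, hyw⟩
        · exact absurd ⟨c, hc, hcU⟩ hB
        · refine ⟨y, ?_, c, ⟨Or.inr ⟨rfl, hyw⟩, hcU⟩, hxy.symm⟩
          by_contra hyU
          exact hB ⟨y, hyw, hyU⟩
    · obtain ⟨u, hu⟩ := hUn
      rcases hU hu with hu' | ⟨rfl, hyw⟩
      · exact absurd ⟨u, hu, hu'⟩ hA
      · exact ⟨u, hu, y, ⟨Or.inl hyw, fun hh => hA ⟨y, hh, hyw⟩⟩, hxy⟩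
  · intro w₁ w₂ hne
    have hd := Set.disjoint_left.1 (h2 w₁ w₂ hne)
    rw [Set.disjoint_left]
    rintro u (hu | ⟨rfl, hu⟩) (hv | ⟨h, hv⟩)
    · exact hd hu hv
    · subst h; exact hxf _ hu
    · exact hxf _ hv
    · exact hd hu hv
  · intro w₁ w₂ hw
    obtain ⟨a, ha, b, hb, hab⟩ := h3 w₁ w₂ hw
    rcases hH' a b hab with h | ⟨rfl, rfl⟩ | ⟨rfl, rfl⟩
    · exact ⟨a, Or.inl ha, b, Or.inl hb, h⟩
    · exact ⟨x, Or.inr ⟨rfl, ha⟩, b, Or.inl hb, hxz⟩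
    · exact ⟨a, Or.inl ha, x, Or.inr ⟨rfl, hb⟩, hxz.symm⟩
  · rintro w u (hu | ⟨rfl, -⟩)
    · exact (h4 w hu).1
    · exact hx

/-- Triangle with a degree two vertex. -/
theorem case_triangle [Finite V] {H : SimpleGraph V} {X : Set V} {x y z : V}
    (hx : x ∈ X) (hy : y ∈ X) (hz : z ∈ X)
    (hxy : H.Adj x y) (hxz : H.Adj x z) (hyz : H.Adj y z)
    (hdeg : ∀ u ∈ X, H.Adj x u → u = y ∨ u = z)
    (hby : ∃ S ⊆ X, y ∉ S ∧ Core H S) (hbz : ∃ S ⊆ X, z ∉ S ∧ Core H S)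
    (h4 : ¬ MinorIn K4 H X) (hC : ¬ MinorIn C32 H X) (hA : ¬ MinorIn graphA H X) : False := by
  have main : ∀ y z : V, y ∈ X → z ∈ X → H.Adj x y → H.Adj x z → H.Adj y z →
      (∀ u ∈ X, H.Adj x u → u = y ∨ u = z) → (∃ S ⊆ X, z ∉ S ∧ Core H S) →
      ∃ P ⊆ X, x ∉ P ∧ y ∉ P ∧ z ∉ P ∧ Loop H y P := by
    intro y z hy hz hxy hxz hyz hdeg ⟨S, hSX, hzS, hS⟩
    have hxS : x ∉ S := by
      intro h
      obtain ⟨a, ha, b, hb, hab, hxa, hxb⟩ := hS.2 x h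
      have h1 : a = y := (hdeg a (hSX ha) hxa).resolve_right (fun h => hzS (h ▸ ha))
      have h2 : b = y := (hdeg b (hSX hb) hxb).resolve_right (fun h => hzS (h ▸ hb))
      exact hab (h1.trans h2.symm)
    have nocore : ∀ C ⊆ S \ {y}, ¬ Core H C := by
      intro C hCS hCC
      obtain ⟨w, hw, P, hP, hL⟩ := core_loop hCC
      apply hC
      refine two_loops (triangle_loop hxy hxz hyz) hL ?_ (fun u hu => hSX (hCS (hP hu)).1) hx
        (hSX (hCS hw).1) ?_
      · rintro u (rfl | rfl) <;> assumption
      · have hsub : {w} ∪ P ⊆ S \ {y} :=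
          Set.union_subset (by simpa using hCS hw) (hP.trans hCS)
        rw [Set.disjoint_left]
        rintro u (rfl | rfl | rfl) hu
        · exact hxS (hsub hu).1
        · exact (hsub hu).2 rfl
        · exact hzS (hsub hu).1
    have hyS : y ∈ S := by
      by_contra h
      exact nocore S (fun u hu => ⟨hu, fun hh => h (hh ▸ hu)⟩) hS
    rcases core_loop_at hS hyS with ⟨C, hCS, hCC⟩ | ⟨P, hP, hL⟩
    · exact absurd hCC (nocore C hCS)
    · exact ⟨P, fun u hu => hSX (hP hu).1, fun h => hxS (hP h).1, fun h => (hP h).2 rfl,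
        fun h => hzS (hP h).1, hL⟩
  obtain ⟨P, hPX, hxP, hyP, hzP, hLP⟩ := main y z hy hz hxy hxz hyz hdeg hbz
  obtain ⟨Q, hQX, hxQ, hzQ, hyQ, hLQ⟩ := main z y hz hy hxz hxy hyz.symm
    (fun u hu h => (hdeg u hu h).symm) hby
  by_cases hPQ : (P ∩ Q).Nonempty
  · have := labels (hLP.2.1.union hLQ.2.1 (Or.inl hPQ)) (Set.union_subset hPX hQX) hx hy hz
      (by simp [hxP, hxQ]) (by simp [hyP, hyQ]) (by simp [hzP, hzQ]) hxy hxz hyz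
      (by
        obtain ⟨a, ha, b, hb, h⟩ := hLP.2.2
        exact ⟨a, Or.inl ha, b, Or.inl hb, h⟩)
      (by
        obtain ⟨a, ha, b, hb, h⟩ := hLQ.2.2
        exact ⟨a, Or.inr ha, b, Or.inr hb, h⟩)
    tauto
  · apply hC
    refine two_loops hLP hLQ hPX hQX hy hz ?_
    rw [Set.disjoint_left]
    rintro u (rfl | hu) (h | hv)
    · exact hyz.ne h
    · exact hyQ hv
    · rw [Set.mem_singleton_iff] at h
      subst h; exact hzP hu
    · exact hPQ ⟨u, hu, hv⟩

/-- All degrees at least three. -/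
theorem case_three [Finite V] {H : SimpleGraph V} {X : Set V} {x v : V}
    (hx : x ∈ X) (hv : v ∈ X) (hxv : x ≠ v)
    (hdeg : ∀ s ∈ X, ∀ p q : V, ∃ u ∈ X, u ≠ p ∧ u ≠ q ∧ H.Adj s u)
    (hF : ∀ C ⊆ X \ {x, v}, ¬ Core H C) : MinorIn K4 H X := by
  -- leaves
  have leaf : ∀ c ∈ X, ¬ Two H (X \ {x, v}) c → H.Adj c x ∧ H.Adj c v ∧
      ∃ u ∈ X \ {x, v}, H.Adj c u := by
    intro c hc h2
    have key : ∀ p, ∃ u ∈ X, u ≠ p ∧ H.Adj c u ∧ (u = x ∨ u = v) := by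
      intro p
      by_contra! hcon
      obtain ⟨a, ha, hap, -, hca⟩ := hdeg c hc p p
      obtain ⟨b, hb, hbp, hba, hcb⟩ := hdeg c hc p a
      have h1 := hcon a ha hap hca
      have h2' := hcon b hb hbp hcb
      exact h2 ⟨a, ⟨ha, by simp [h1]⟩, b, ⟨hb, by simp [h2']⟩, hba.symm, hca, hcb⟩
    obtain ⟨a, ha, hap, hca, ha'⟩ := key v
    obtain ⟨b, hb, hbp, hcb, hb'⟩ := key x
    obtain ⟨u, hu, hux, huv, hcu⟩ := hdeg c hc x v
    exact ⟨ha'.resolve_right hap ▸ hca, hb'.resolve_left hbp ▸ hcb, u, ⟨hu, by simp [hux, huv]⟩, hcu⟩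
  have nocore : ∀ T ⊆ X \ {x, v}, T.Nonempty → ∃ c ∈ T, ¬ Two H T c := by
    intro T hT hTn
    by_contra! h
    exact hF T hT ⟨hTn, h⟩
  obtain ⟨a₀, ha₀, hne1, hne2, -⟩ := hdeg x hx x v
  obtain ⟨a, ha, ha2⟩ := nocore _ le_rfl ⟨a₀, ha₀, by simp [hne1, hne2]⟩
  obtain ⟨hax, hav, a', ha', haa'⟩ := leaf a ha.1 ha2
  obtain ⟨T, hT, haT, cT, hcl⟩ := exists_comp H _ a ha
  have hTX : T ⊆ X := fun u hu => (hT hu).1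
  have hxT : x ∉ T := fun h => (hT h).2 (by simp)
  have hvT : v ∉ T := fun h => (hT h).2 (by simp)
  have ha'T : a' ∈ T := hcl a haT a' ha' haa'
  have tTwo : ∀ t ∈ T, Two H (X \ {x, v}) t → Two H T t := by
    rintro t ht ⟨p, hp, q, hq, hpq, h1, h2⟩
    exact ⟨p, hcl t ht p hp h1, q, hcl t ht q hq h2, hpq, h1, h2⟩
  have hb : ∃ b ∈ T, b ≠ a ∧ ¬ Two H T b := by
    by_contra! h
    obtain ⟨C, hC, hCC⟩ := almost_core (H := H) _ T rfl a haT ⟨a', ha'T, haa'⟩ h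
    exact hF C (hC.trans hT) hCC
  obtain ⟨b, hbT, hba, hb2⟩ := hb
  obtain ⟨hbx, hbv, b', hb', hbb'⟩ := leaf b (hTX hbT) (fun h => hb2 (tTwo b hbT h))
  -- a linking set L containing x, adjacent to v, disjoint from T
  have link : ∀ L ⊆ X, CC H L → x ∈ L → v ∉ L → Disjoint L T → EE H L {v} → MinorIn K4 H X := by
    intro L hLX cL hxL hvL dL eL
    obtain ⟨A, B, hAB, dAB, cA, cB, hpA, hqB, eAB⟩ := split cT haT hbT hba.symm
    have tA : A ⊆ T := hAB ▸ Set.subset_union_left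
    have tB : B ⊆ T := hAB ▸ Set.subset_union_right
    refine mkK4 cL (CC.single H v) cA cB (by simpa using hvL) (dL.mono_right tA) (dL.mono_right tB)
      ?_ ?_ dAB eL ⟨x, hxL, a, hpA, hax.symm⟩ ⟨x, hxL, b, hqB, hbx.symm⟩
      ⟨v, rfl, a, hpA, hav.symm⟩ ⟨v, rfl, b, hqB, hbv.symm⟩ eAB hLX (by simpa using hv)
      (tA.trans hTX) (tB.trans hTX) <;> rw [Set.disjoint_singleton_left]
    · exact fun h => hvT (tA h)
    · exact fun h => hvT (tB h)
  obtain ⟨u, hu, hua, hub, hvu⟩ := hdeg v hv a b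
  by_cases hux : u = x
  · subst hux
    exact link {u} (by simpa using hx) (CC.single H u) rfl (by simpa using hxv.symm) (by simpa using hxT)
      ⟨u, rfl, v, rfl, hvu.symm⟩
  by_cases huT : u ∈ T
  · -- the third case
    have ha2T : ¬ Two H T a := by
      rintro ⟨p, hp, q, hq, h⟩
      exact ha2 ⟨p, hT hp, q, hT hq, h⟩
    have c1 : CC H (T \ {a}) := cT.remove_leaf ha2T ⟨u, huT, hua⟩
    have c2 : CC H ((T \ {a}) \ {b}) := by
      refine c1.remove_leaf ?_ ⟨u, ⟨huT, hua⟩, hub⟩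
      rintro ⟨p, hp, q, hq, h⟩
      exact hb2 ⟨p, hp.1, q, hq.1, h⟩
    have eb : EE H {b} ((T \ {a}) \ {b}) := by
      refine c1.ee_compl ⟨b, rfl⟩ c2.1 ?_ Set.disjoint_sdiff_right
      exact Set.union_sdiff_cancel (by simpa using ⟨hbT, hba⟩)
    have ea : EE H {a} ((T \ {a}) \ {b}) := by
      have cb : CC H (T \ {b}) := cT.remove_leaf hb2 ⟨u, huT, hub⟩
      refine cb.ee_compl ⟨a, rfl⟩ c2.1 ?_ (Set.disjoint_sdiff_right.mono_right Set.sdiff_subset)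
      ext w
      simp only [Set.mem_union, Set.mem_singleton_iff, Set.mem_sdiff]
      constructor
      · rintro (rfl | h)
        · exact ⟨haT, hba.symm⟩
        · exact ⟨h.1.1, h.2⟩
      · intro h
        by_cases hwa : w = a
        · exact Or.inl hwa
        · exact Or.inr ⟨⟨h.1, hwa⟩, h.2⟩
    have cxa : CC H ({x} ∪ {a}) := (CC.single H x).union (CC.single H a)
      (Or.inr ⟨x, rfl, a, rfl, hax.symm⟩)
    refine mkK4 cxa (CC.single H v) (CC.single H b) c2 ?_ ?_ ?_ ?_ ?_ Set.disjoint_sdiff_right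
      ⟨a, by simp, v, rfl, hav⟩ ⟨x, by simp, b, rfl, hbx.symm⟩
      (ea.mono Set.subset_union_right le_rfl) ⟨v, rfl, b, rfl, hbv.symm⟩
      ⟨v, rfl, u, ⟨⟨huT, hua⟩, hub⟩, hvu⟩ eb ?_ (by simpa using hv) (by simpa using hTX hbT)
      (fun w hw => hTX hw.1.1)
    · simp [hxv.symm, hav.ne']
    · simp [hbx.ne, hba]
    · rw [Set.disjoint_left]
      rintro w (rfl | rfl) hw
      · exact hxT hw.1.1
      · exact hw.1.2 rfl
    · simpa using hbv.ne'
    · rw [Set.disjoint_singleton_left]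
      exact fun h => hvT h.1.1
    · rintro w (rfl | rfl)
      · exact hx
      · exact hTX haT
  · have huF : u ∈ X \ {x, v} := ⟨hu, by simp [hux, hvu.ne']⟩
    obtain ⟨c, hc, hc2⟩ := nocore ((X \ {x, v}) \ T) Set.sdiff_subset ⟨u, huF, huT⟩
    obtain ⟨hcx, hcv, -⟩ := leaf c hc.1.1 (by
      rintro ⟨p, hp, q, hq, hpq, h1, h2⟩
      exact hc2 ⟨p, ⟨hp, fun h => hc.2 (hcl p h c hc.1 h1.symm)⟩,
        q, ⟨hq, fun h => hc.2 (hcl q h c hc.1 h2.symm)⟩, hpq, h1, h2⟩)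
    refine link ({x} ∪ {c}) ?_ ((CC.single H x).union (CC.single H c)
      (Or.inr ⟨x, rfl, c, rfl, hcx.symm⟩)) (by simp) (by simp [hxv.symm, hcv.ne']) ?_
      ⟨c, by simp, v, rfl, hcv⟩
    · rintro w (rfl | rfl)
      · exact hx
      · exact hc.1.1
    · rw [Set.disjoint_left]
      rintro w (rfl | rfl)
      · exact hxT
      · exact hc.2

theorem main [Finite V] : ∀ n : ℕ, ∀ (H : SimpleGraph V) (X : Set V), X.ncard = n → X.Nonempty →
    ¬ MinorIn K4 H X → ¬ MinorIn C32 H X → ¬ MinorIn graphA H X →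
    ∃ v ∈ X, ∀ S ⊆ X, v ∉ S → ¬ Core H S := by
  intro n
  induction n with
  | zero =>
    intro H X hn hX
    rw [Set.ncard_eq_zero] at hn
    simp [hn] at hX
  | succ n ih =>
    intro H X hn hX h4 hC hA
    by_contra! hbad
    have hcard : ∀ x ∈ X, (X \ {x}).ncard = n := by
      intro x hx
      rw [Set.ncard_sdiff_singleton_of_mem hx, hn]; rfl
    have hne : ∀ x ∈ X, (X \ {x}).Nonempty := by
      intro x hx
      obtain ⟨S, hS, hxS, ⟨s, hs⟩, -⟩ := hbad x hx
      exact ⟨s, hS hs, fun h => hxS (h ▸ hs)⟩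
    have del : ∀ x ∈ X, ∃ v ∈ X \ {x}, ∀ S ⊆ X \ {x}, v ∉ S → ¬ Core H S := by
      intro x hx
      exact ih H (X \ {x}) (hcard x hx) (hne x hx) (fun h => h4 (h.mono Set.sdiff_subset))
        (fun h => hC (h.mono Set.sdiff_subset)) (fun h => hA (h.mono Set.sdiff_subset))
    have deg2 : ∀ x ∈ X, Two H X x := by
      intro x hx
      obtain ⟨v, hv, hvS⟩ := del x hx
      obtain ⟨S, hS, hvS', hSC⟩ := hbad v hv.1
      by_contra h2
      refine hvS S (fun s hs => ⟨hS hs, ?_⟩) hvS' hSC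
      rintro rfl
      obtain ⟨a, ha, b, hb, h⟩ := hSC.2 s hs
      exact h2 ⟨a, hS ha, b, hS hb, h⟩
    have deg3 : ∀ x ∈ X, ∀ y ∈ X, ∀ z ∈ X, y ≠ z → H.Adj x y → H.Adj x z →
        ∃ u ∈ X, u ≠ y ∧ u ≠ z ∧ H.Adj x u := by
      intro x hx y hy z hz hyz hxy hxz
      by_contra! hd
      have hdeg : ∀ u ∈ X, H.Adj x u → u = y ∨ u = z := by
        intro u hu hxu
        by_contra! h
        exact hd u hu h.1 h.2 hxu
      by_cases hadj : H.Adj y z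
      · exact case_triangle hx hy hz hxy hxz hadj hdeg (hbad y hy) (hbad z hz) h4 hC hA
      · let H' : SimpleGraph V := H ⊔ SimpleGraph.edge y z
        have hle : ∀ a b, H.Adj a b → H'.Adj a b := fun a b h => Or.inl h
        have hyz' : H'.Adj y z := by
          right
          rw [SimpleGraph.edge_adj]
          exact ⟨Or.inl ⟨rfl, rfl⟩, hyz⟩
        have hH' : ∀ a b, H'.Adj a b → H.Adj a b ∨ (a = y ∧ b = z) ∨ (a = z ∧ b = y) := by
          rintro a b (h | h)
          · exact Or.inl h
          · rw [SimpleGraph.edge_adj] at h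
            right
            tauto
        obtain ⟨v, hv, hvS⟩ := ih H' (X \ {x}) (hcard x hx) (hne x hx)
          (fun h => h4 (contract hx hxy hxz hH' h))
          (fun h => hC (contract hx hxy hxz hH' h)) (fun h => hA (contract hx hxy hxz hH' h))
        obtain ⟨S, hS, hvS', hSC⟩ := hbad v hv.1
        refine hvS (S \ {x}) (fun s hs => ⟨hS hs.1, hs.2⟩) (fun h => hvS' h.1) ?_
        have hSyz : x ∈ S → y ∈ S ∧ z ∈ S := by
          intro hxS
          obtain ⟨a, ha, b, hb, hab, hxa, hxb⟩ := hSC.2 x hxS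
          rcases hdeg a (hS ha) hxa with rfl | rfl <;> rcases hdeg b (hS hb) hxb with rfl | rfl
          · exact absurd rfl hab
          · exact ⟨ha, hb⟩
          · exact ⟨hb, ha⟩
          · exact absurd rfl hab
        refine ⟨?_, ?_⟩
        · by_cases hxS : x ∈ S
          · exact ⟨y, (hSyz hxS).1, hxy.ne'⟩
          · obtain ⟨s, hs⟩ := hSC.1
            exact ⟨s, hs, fun h => hxS (h ▸ hs)⟩
        · have aux : ∀ s ∈ S, H.Adj s x → x ∈ S → ∀ b ∈ S, b ≠ x → H.Adj s b →
              Two H' (S \ {x}) s := by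
            intro s hs hsx hxS b hb hbx hsb
            obtain ⟨hyS, hzS⟩ := hSyz hxS
            rcases hdeg s (hS hs) hsx.symm with rfl | rfl
            · refine ⟨b, ⟨hb, hbx⟩, z, ⟨hzS, hxz.ne'⟩, ?_, hle _ _ hsb, hyz'⟩
              rintro rfl
              exact hadj hsb
            · refine ⟨b, ⟨hb, hbx⟩, y, ⟨hyS, hxy.ne'⟩, ?_, hle _ _ hsb, hyz'.symm⟩
              rintro rfl
              exact hadj hsb.symm
          rintro s ⟨hs, hsx⟩
          obtain ⟨a, ha, b, hb, hab, hsa, hsb⟩ := hSC.2 s hs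
          by_cases hax : a = x
          · subst hax
            exact aux s hs hsa ha b hb hab.symm hsb
          by_cases hbx : b = x
          · subst hbx
            exact aux s hs hsb hb a ha hab hsa
          exact ⟨a, ⟨ha, hax⟩, b, ⟨hb, hbx⟩, hab, hle _ _ hsa, hle _ _ hsb⟩
    obtain ⟨x, hx⟩ := hX
    obtain ⟨v, hv, hvS⟩ := del x hx
    apply h4
    refine case_three hx hv.1 (fun h => hv.2 h.symm) ?_ ?_
    · intro s hs p q
      obtain ⟨a, ha, b, hb, hab, hsa, hsb⟩ := deg2 s hs
      obtain ⟨c, hc, hca, hcb, hsc⟩ := deg3 s hs a ha b hb hab hsa hsb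
      by_contra! h
      have key : ∀ u ∈ X, H.Adj s u → u = p ∨ u = q := by
        intro u hu hsu
        by_contra! hh
        exact h u hu hh.1 hh.2 hsu
      rcases key a ha hsa with h1 | h1 <;> rcases key b hb hsb with h2 | h2 <;>
        rcases key c hc hsc with h3 | h3 <;> subst h1 <;> first
          | exact hab h2.symm
          | exact hca h3
          | exact hcb (h3.trans h2.symm)
    · intro C hCX
      refine hvS C (fun c hc => ⟨(hCX hc).1, fun h => (hCX hc).2 (Or.inl h)⟩)
        (fun h => (hCX h).2 (Or.inr rfl))

theorem acyclic_of_no_core {H : SimpleGraph V} {v : V} (h : ∀ S : Set V, v ∉ S → ¬ Core H S) :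
    (H.induce {u | u ≠ v}).IsAcyclic := by
  intro w c hc
  refine h (Subtype.val '' {u | u ∈ c.support}) ?_ ⟨⟨w.1, w, c.start_mem_support, rfl⟩, ?_⟩
  · rintro ⟨u, -, hu⟩
    exact u.2 hu
  · rintro _ ⟨u, hu, rfl⟩
    have h2 := hc.ncard_neighborSet_toSubgraph_eq_two hu
    rw [Set.ncard_eq_two] at h2
    obtain ⟨a, b, hab, heq⟩ := h2
    have ha : c.toSubgraph.Adj u a := by
      have : a ∈ c.toSubgraph.neighborSet u := by rw [heq]; simp
      exact this
    have hb : c.toSubgraph.Adj u b := by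
      have : b ∈ c.toSubgraph.neighborSet u := by rw [heq]; simp
      exact this
    refine ⟨a.1, ⟨a, ?_, rfl⟩, b.1, ⟨b, ?_, rfl⟩, fun hh => hab (Subtype.ext hh), ?_, ?_⟩
    · exact (c.mem_verts_toSubgraph).1 ha.snd_mem
    · exact (c.mem_verts_toSubgraph).1 hb.snd_mem
    · simpa using ha.adj_sub
    · simpa using hb.adj_sub

end NF

/-- Lemma 2.1. If a graph `H` has no `K₄`, `C_{3,2}` or `A` minor, then
`H` has a vertex `v` such that `H \ v` is a forest. -/
theorem near_forest_of_no_K4_C32_A_minor {V : Type} [Fintype V] [Nonempty V]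
    (H : SimpleGraph V) (h4 : ¬ IsMinor K4 H) (hC : ¬ IsMinor C32 H)
    (hA : ¬ IsMinor graphA H) :
    ∃ v : V, (H.induce {u | u ≠ v}).IsAcyclic := by
  obtain ⟨v, -, hv⟩ := NF.main _ H Set.univ rfl Set.univ_nonempty (fun h => h4 h.toMinor)
    (fun h => hC h.toMinor) (fun h => hA h.toMinor)
  exact ⟨v, NF.acyclic_of_no_core (fun S hS => hv S (Set.subset_univ S) hS)⟩
end

section
/- If a graph H has a vertex v such that H∖v is a forest, then there exists a positive integer k such that H is isomorphic to a minor of 𝒫_k. -/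
/-!
Common definitions: minors, widths, connectivity, the specific graphs
`K4`, `K23`, `C32`, `graphA`, the binary trees `CT_h`, the graphs `𝒫_k`, `𝒬_k`,
the trees `T_h`, homeomorphic embeddings, cascades, and related notions,
following Dang--Thomas, "Minors of two-connected graphs of large path-width".
-/

open SimpleGraph

theorem exists_low_vertex {V : Type} (H : SimpleGraph V) (S : Finset V)
    (hS : (H.induce (S : Set V)).IsAcyclic) (hne : S.Nonempty) :
    ∃ x ∈ S, ∀ a ∈ S, ∀ b ∈ S, H.Adj x a → H.Adj x b → a = b := by
  classical
  obtain ⟨x₀, hx₀⟩ := hne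
  let c := (H.induce (S : Set V)).connectedComponentMk ⟨x₀, hx₀⟩
  have hT := hS.isTree_connectedComponent c
  have key : ∀ x : c, ∀ a (ha : a ∈ S), H.Adj x.1.1 a →
      ∃ h : (⟨a, ha⟩ : (S : Set V)) ∈ c, c.toSimpleGraph.Adj x ⟨⟨a, ha⟩, h⟩ := by
    intro x a ha hadj
    have hadj' : (H.induce (S : Set V)).Adj x.1 ⟨a, ha⟩ := hadj
    have hx : x.1 ∈ c.supp := x.2
    have : (⟨a, ha⟩ : (S : Set V)) ∈ c.supp :=
      (c.mem_supp_congr_adj hadj').1 hx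
    exact ⟨this, hadj'⟩
  rcases subsingleton_or_nontrivial c with hs | hn
  · refine ⟨x₀, hx₀, ?_⟩
    intro a ha b hb h1 h2
    obtain ⟨h, h'⟩ := key ⟨⟨x₀, hx₀⟩, rfl⟩ a ha h1
    exact absurd (Subsingleton.elim _ _) h'.ne
  · have : Fintype c := Fintype.ofFinite _
    obtain ⟨x, hx⟩ := hT.exists_vert_degree_one_of_nontrivial
    refine ⟨x.1.1, x.1.2, ?_⟩
    intro a ha b hb h1 h2
    obtain ⟨h3, h3'⟩ := key x a ha h1
    obtain ⟨h4, h4'⟩ := key x b hb h2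
    rw [SimpleGraph.degree_eq_one_iff_existsUnique_adj] at hx
    have := hx.unique h3' h4'
    simpa using this

/-- A good model of `H[S]` in the binary tree of height `k`. -/
structure GoodModel {V : Type} (H : SimpleGraph V) (S : Finset V) (k : ℕ)
    (f : V → Set (List Bool)) : Prop where
  len : ∀ w ∈ S, ∀ x ∈ f w, x.length ≤ k
  leaf : ∀ w ∈ S, ∃ x ∈ f w, x.length = k
  root : ∀ w ∈ S, ∃ r ∈ f w, ∀ x ∈ f w, x = r ∨ ∃ b y, x = b :: y ∧ y ∈ f w
  disj : ∀ w ∈ S, ∀ w' ∈ S, ∀ x, x ∈ f w → x ∈ f w' → w = w'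
  adj : ∀ w ∈ S, ∀ w' ∈ S, H.Adj w w' →
    ∃ b y, (y ∈ f w ∧ b :: y ∈ f w') ∨ (y ∈ f w' ∧ b :: y ∈ f w)

theorem extend_model {V : Type} [DecidableEq V] {H : SimpleGraph V} {S : Finset V} {k : ℕ}
    {f : V → Set (List Bool)} (hf : GoodModel H S k f) (u p : V) (hu : u ∉ S) (hp : p ∈ S)
    (hup : ∀ w ∈ S, H.Adj u w → w = p) :
    ∃ g, GoodModel H (insert u S) (k + 1) g := by
  obtain ⟨τ, hτ, hτk⟩ := hf.leaf p hp
  let e : V → Set (List Bool) := fun w => {x | x ∈ f w ∨ ∃ σ ∈ f w, σ.length = k ∧ x = false :: σ}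
  let g : V → Set (List Bool) := fun w => if w = u then {true :: τ} else e w
  have gu : g u = {true :: τ} := by simp [g]
  have gS : ∀ w ∈ S, g w = e w := by
    intro w hw
    have : w ≠ u := fun h => hu (h ▸ hw)
    simp [g, this]
  have he : ∀ w ∈ S, true :: τ ∉ e w := by
    rintro w hw (h | ⟨σ, _, _, h⟩)
    · have := hf.len w hw _ h
      simp at this; omega
    · simp at h
  refine ⟨g, ?_, ?_, ?_, ?_, ?_⟩
  · intro w hw x hx
    rcases Finset.mem_insert.1 hw with rfl | hw
    · rw [gu] at hx
      obtain rfl : x = true :: τ := hx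
      simp [hτk]
    · rw [gS w hw] at hx
      rcases hx with hx | ⟨σ, h1, h2, rfl⟩
      · have := hf.len w hw x hx; omega
      · simp [h2]
  · intro w hw
    rcases Finset.mem_insert.1 hw with rfl | hw
    · exact ⟨true :: τ, by rw [gu]; rfl, by simp [hτk]⟩
    · obtain ⟨σ, h1, h2⟩ := hf.leaf w hw
      exact ⟨false :: σ, by rw [gS w hw]; exact Or.inr ⟨σ, h1, h2, rfl⟩, by simp [h2]⟩
  · intro w hw
    rcases Finset.mem_insert.1 hw with rfl | hw
    · exact ⟨true :: τ, by rw [gu]; rfl, by rw [gu]; intro x hx; exact Or.inl hx⟩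
    · rw [gS w hw]
      obtain ⟨r, hr, h⟩ := hf.root w hw
      refine ⟨r, Or.inl hr, ?_⟩
      rintro x (hx | ⟨σ, h1, h2, rfl⟩)
      · rcases h x hx with h | ⟨b, y, h, h'⟩
        · exact Or.inl h
        · exact Or.inr ⟨b, y, h, Or.inl h'⟩
      · exact Or.inr ⟨false, σ, rfl, Or.inl h1⟩
  · intro w hw w' hw' x hx hx'
    replace hw := Finset.mem_insert.1 hw
    replace hw' := Finset.mem_insert.1 hw'
    rcases hw with h | hw <;> rcases hw' with h' | hw'
    · rw [h, h']
    · subst h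
      rw [gu] at hx
      obtain rfl : x = true :: τ := hx
      rw [gS w' hw'] at hx'
      exact absurd hx' (he w' hw')
    · subst h'
      rw [gu] at hx'
      obtain rfl : x = true :: τ := hx'
      rw [gS w hw] at hx
      exact absurd hx (he w hw)
    · rw [gS w hw] at hx
      rw [gS w' hw'] at hx'
      rcases hx with hx | ⟨σ, h1, h2, rfl⟩ <;> rcases hx' with hx' | ⟨σ', h1', h2', h3'⟩
      · exact hf.disj w hw w' hw' x hx hx'
      · have := hf.len w hw x hx
        subst h3'
        simp at this; omega
      · have := hf.len w' hw' _ hx'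
        simp at this; omega
      · obtain rfl : σ = σ' := by simpa using h3'
        exact hf.disj w hw w' hw' σ h1 h1'
  · intro w hw w' hw' hadj
    replace hw := Finset.mem_insert.1 hw
    replace hw' := Finset.mem_insert.1 hw'
    rcases hw with h | hw <;> rcases hw' with h' | hw'
    · rw [h, h'] at hadj; exact absurd rfl hadj.ne
    · subst h
      obtain rfl := hup w' hw' hadj
      exact ⟨true, τ, Or.inr ⟨by rw [gS _ hw']; exact Or.inl hτ, by rw [gu]; rfl⟩⟩
    · subst h'
      obtain rfl := hup w hw hadj.symm
      exact ⟨true, τ, Or.inl ⟨by rw [gS _ hw]; exact Or.inl hτ, by rw [gu]; rfl⟩⟩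
    · rw [gS w hw, gS w' hw']
      obtain ⟨b, y, h | h⟩ := hf.adj w hw w' hw' hadj
      · exact ⟨b, y, Or.inl ⟨Or.inl h.1, Or.inl h.2⟩⟩
      · exact ⟨b, y, Or.inr ⟨Or.inl h.1, Or.inl h.2⟩⟩

theorem exists_model {V : Type} [DecidableEq V] (H : SimpleGraph V) (n : ℕ) :
    ∀ S : Finset V, S.card = n → (H.induce (S : Set V)).IsAcyclic →
      ∃ k, 0 < k ∧ ∃ f, GoodModel H S k f := by
  induction n with
  | zero =>
    intro S hS _
    obtain rfl := Finset.card_eq_zero.1 hS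
    exact ⟨1, one_pos, fun _ => ∅, by constructor <;> simp⟩
  | succ n ih =>
    intro S hS hac
    obtain ⟨u, hu, hdeg⟩ := exists_low_vertex H S hac (Finset.card_pos.1 (by omega))
    have hsub : ((S.erase u : Finset V) : Set V) ⊆ (S : Set V) := by
      exact_mod_cast Finset.erase_subset u S
    obtain ⟨k, hk, f, hf⟩ := ih (S.erase u) (by rw [Finset.card_erase_of_mem hu]; omega)
      (hac.embedding (SimpleGraph.induceHomOfLE H hsub))
    rw [← Finset.insert_erase hu]
    by_cases hE : (S.erase u).Nonempty
    · obtain ⟨q, hq⟩ := hE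
      have : ∃ p ∈ S.erase u, ∀ w ∈ S.erase u, H.Adj u w → w = p := by
        by_cases hn : ∃ p ∈ S.erase u, H.Adj u p
        · obtain ⟨p, hp, hup⟩ := hn
          exact ⟨p, hp, fun w hw h => hdeg w (Finset.mem_of_mem_erase hw) p
            (Finset.mem_of_mem_erase hp) h hup⟩
        · exact ⟨q, hq, fun w hw h => absurd ⟨w, hw, h⟩ hn⟩
      obtain ⟨p, hp, hup⟩ := this
      obtain ⟨g, hg⟩ := extend_model hf u p (Finset.notMem_erase u S) hp hup
      exact ⟨k + 1, by omega, g, hg⟩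
    · rw [Finset.not_nonempty_iff_eq_empty.1 hE]
      exact ⟨1, one_pos, fun _ => {[true]}, by constructor <;> simp⟩

theorem Pgraph_adj_child {k : ℕ} (b : Bool) (y : List Bool) (h : (b :: y).length ≤ k)
    (h' : y.length ≤ k) : (Pgraph k).Adj (some ⟨y, h'⟩) (some ⟨b :: y, h⟩) := by
  rw [Pgraph, SimpleGraph.fromEdgeSet_adj]
  refine ⟨Or.inl ⟨b, y, by simpa using h, rfl⟩, ?_⟩
  simp

theorem Pgraph_adj_leaf {k : ℕ} (l : CTVert k) (h : l.1.length = k) :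
    (Pgraph k).Adj none (some l) := by
  rw [Pgraph, SimpleGraph.fromEdgeSet_adj]
  exact ⟨Or.inr ⟨l, h, rfl⟩, by simp⟩

/-- Lemma 2.2. If a graph `H` has a vertex `v` such that `H \ v` is a
forest, then `H` is isomorphic to a minor of `𝒫_k` for some `k`. -/
theorem minor_of_Pk_of_near_forest {V : Type} [Fintype V] (H : SimpleGraph V) (v : V)
    (hv : (H.induce {u | u ≠ v}).IsAcyclic) :
    ∃ k : ℕ, 0 < k ∧ IsMinor H (Pgraph k) := by
  classical
  have hset : ((Finset.univ.erase v : Finset V) : Set V) = {u | u ≠ v} := by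
    ext; simp
  obtain ⟨k, hk, f, hf⟩ := exists_model H _ (Finset.univ.erase v) rfl (by rw [hset]; exact hv)
  have hm : ∀ w, w ≠ v → w ∈ Finset.univ.erase v := fun w hw => by simp [hw]
  let g : V → Set (Option (CTVert k)) := fun w =>
    if w = v then {none} else {x | ∃ l : CTVert k, l.1 ∈ f w ∧ x = some l}
  have gv : g v = {none} := by simp [g]
  have gw : ∀ w, w ≠ v → g w = {x | ∃ l : CTVert k, l.1 ∈ f w ∧ x = some l} := by
    intro w hw; simp [g, hw]
  have gleaf : ∀ w, w ≠ v → ∃ x ∈ g w, (Pgraph k).Adj none x := by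
    intro w hw
    obtain ⟨x, hx, hxk⟩ := hf.leaf w (hm w hw)
    refine ⟨some ⟨x, hxk.le⟩, ?_, Pgraph_adj_leaf _ hxk⟩
    rw [gw w hw]; exact ⟨_, hx, rfl⟩
  refine ⟨k, hk, g, ?_, ?_, ?_, ?_⟩
  · intro w
    by_cases hw : w = v
    · subst hw; rw [gv]; exact ⟨none, rfl⟩
    · obtain ⟨x, hx, _⟩ := gleaf w hw
      exact ⟨x, hx⟩
  · intro w
    by_cases hw : w = v
    · subst hw; rw [gv, SimpleGraph.induce_singleton_eq_top]; exact SimpleGraph.connected_top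
    · obtain ⟨r, hr, h⟩ := hf.root w (hm w hw)
      have hlen := hf.len w (hm w hw)
      have hmem : ∀ x (hx : x ∈ f w), some (⟨x, hlen x hx⟩ : CTVert k) ∈ g w := by
        intro x hx; rw [gw w hw]; exact ⟨_, hx, rfl⟩
      have key : ∀ x (hx : x ∈ f w), ((Pgraph k).induce (g w)).Reachable
          ⟨some ⟨r, hlen r hr⟩, hmem r hr⟩ ⟨some ⟨x, hlen x hx⟩, hmem x hx⟩ := by
        intro x
        induction x with
        | nil =>
          intro hx
          rcases h _ hx with h | ⟨b, y, h, _⟩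
          · subst h; exact SimpleGraph.Reachable.refl _
          · simp at h
        | cons a t ih =>
          intro hx
          rcases h _ hx with h | ⟨b, y, h, hy⟩
          · subst h; exact SimpleGraph.Reachable.refl _
          · obtain ⟨rfl, rfl⟩ : a = b ∧ t = y := by simpa using h
            refine (ih hy).trans (SimpleGraph.Adj.reachable ?_)
            exact Pgraph_adj_child a t (hlen _ hx) (hlen _ hy)
      rw [SimpleGraph.connected_iff_exists_forall_reachable]
      refine ⟨⟨some ⟨r, hlen r hr⟩, hmem r hr⟩, ?_⟩
      rintro ⟨x, hx⟩
      have hx' := hx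
      rw [gw w hw] at hx'
      obtain ⟨l, hl, rfl⟩ := hx'
      exact key l.1 hl
  · intro w₁ w₂ hne
    rw [Set.disjoint_left]
    intro x h1 h2
    by_cases e1 : w₁ = v
    · have e2 : w₂ ≠ v := fun h => hne (e1.trans h.symm)
      subst e1
      rw [gv] at h1
      rw [gw _ e2] at h2
      obtain ⟨l, _, rfl⟩ := h2
      simp at h1
    · rw [gw _ e1] at h1
      obtain ⟨l, hl, rfl⟩ := h1
      by_cases e2 : w₂ = v
      · subst e2
        rw [gv] at h2
        simp at h2
      · rw [gw _ e2] at h2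
        obtain ⟨l', hl', h⟩ := h2
        obtain rfl : l = l' := by simpa using h
        exact hne (hf.disj w₁ (hm _ e1) w₂ (hm _ e2) l.1 hl hl')
  · intro w₁ w₂ hadj
    by_cases e1 : w₁ = v
    · have e2 : w₂ ≠ v := fun h => hadj.ne (e1.trans h.symm)
      obtain ⟨x, hx, hx'⟩ := gleaf w₂ e2
      exact ⟨none, by rw [e1, gv]; rfl, x, hx, hx'⟩
    · by_cases e2 : w₂ = v
      · obtain ⟨x, hx, hx'⟩ := gleaf w₁ e1
        exact ⟨x, hx, none, by rw [e2, gv]; rfl, hx'.symm⟩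
      · have l1 := hf.len w₁ (hm _ e1)
        have l2 := hf.len w₂ (hm _ e2)
        rw [gw _ e1, gw _ e2]
        obtain ⟨b, y, ⟨h1, h2⟩ | ⟨h1, h2⟩⟩ := hf.adj w₁ (hm _ e1) w₂ (hm _ e2) hadj
        · exact ⟨_, ⟨⟨y, l1 _ h1⟩, h1, rfl⟩, _, ⟨⟨b :: y, l2 _ h2⟩, h2, rfl⟩,
            Pgraph_adj_child b y _ _⟩
        · exact ⟨_, ⟨⟨b :: y, l1 _ h2⟩, h2, rfl⟩, _, ⟨⟨y, l2 _ h1⟩, h1, rfl⟩,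
            (Pgraph_adj_child b y _ _).symm⟩
end
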